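/- arXiv:2602.07530 — 9 statements merged into one kernel-verified Lean document; each statement's English description precedes it below -/
import Mathlib

section
/- Let H = (V, 𝓔) be a finite weighted hypergraph with total weight W, let ε ∈ [0,1], and suppose there exists a set O ⊆ V with |O| = r and e(O) ≥ (1−ε)W. Let (x*, z*) with x* : V → [0,1], z* : 𝓔 → [0,1] be an optimal solution of the conformal-subgraph LP at coverage parameter ε (in particular Σ_{v∈V} x*_v ≤ r, since the indicator of O is feasible). Fix κ > 0, set ρ = κ/(1+κ), and let K = {v ∈ V : x*_v ≥ ρ}. Then W − e(K) ≤ (1+κ)·ε·W and |K| ≤ (1 + 1/κ)·r. -/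
open Finset

/-- Total induced weight of hyperedges contained in `K`. -/
noncomputable def inducedWeight {V : Type*} [DecidableEq V]
    (𝓔 : Finset (Finset V)) (w : Finset V → ℝ) (K : Finset V) : ℝ :=
  ∑ e ∈ 𝓔.filter (fun e => e ⊆ K), w e

/-- Total weight of the hypergraph. -/
noncomputable def totalWeight {V : Type*} [DecidableEq V]
    (𝓔 : Finset (Finset V)) (w : Finset V → ℝ) : ℝ :=
  ∑ e ∈ 𝓔, w e

/-- Feasibility for the conformal-subgraph LP at coverage parameter `ε`. -/
def LPFeasible {V : Type*} [Fintype V] [DecidableEq V]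
    (𝓔 : Finset (Finset V)) (w : Finset V → ℝ) (ε : ℝ)
    (x : V → ℝ) (z : Finset V → ℝ) : Prop :=
  (∀ v, x v ∈ Set.Icc (0:ℝ) 1) ∧
  (∀ e ∈ 𝓔, z e ∈ Set.Icc (0:ℝ) 1) ∧
  (∀ e ∈ 𝓔, ∀ v ∈ e, z e ≤ x v) ∧
  (1 - ε) * totalWeight 𝓔 w ≤ ∑ e ∈ 𝓔, w e * z e

/-- bicriteria guarantee of LP rounding (Theorem `main-det`). -/
theorem lp_rounding_bicriteria {V : Type*} [Fintype V] [DecidableEq V]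
    (𝓔 : Finset (Finset V)) (w : Finset V → ℝ) (hw : ∀ e ∈ 𝓔, 0 ≤ w e)
    (ε : ℝ) (hε : ε ∈ Set.Icc (0:ℝ) 1)
    (O : Finset V) (r : ℕ) (hOcard : O.card = r)
    (hOcov : (1 - ε) * totalWeight 𝓔 w ≤ inducedWeight 𝓔 w O)
    (x : V → ℝ) (z : Finset V → ℝ)
    (hfeas : LPFeasible 𝓔 w ε x z)
    (hopt : ∀ x' z', LPFeasible 𝓔 w ε x' z' → ∑ v, x v ≤ ∑ v, x' v)
    (κ : ℝ) (hκ : 0 < κ) :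
    totalWeight 𝓔 w -
        inducedWeight 𝓔 w (Finset.univ.filter (fun v => κ / (1 + κ) ≤ x v)) ≤
      (1 + κ) * ε * totalWeight 𝓔 w ∧
    ((Finset.univ.filter (fun v => κ / (1 + κ) ≤ x v)).card : ℝ) ≤ (1 + 1 / κ) * r := by
  obtain ⟨hx, hz, hzx, hcov⟩ := hfeas
  have h1κ : 0 < 1 + κ := by linarith
  constructor
  · have key : ∑ e ∈ 𝓔, (w e - if e ⊆ (Finset.univ.filter (fun v => κ / (1 + κ) ≤ x v))
        then w e else 0) ≤ ∑ e ∈ 𝓔, (1 + κ) * (w e - w e * z e) := by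
      apply Finset.sum_le_sum
      intro e he
      have hwe := hw e he
      have hze := (hz e he).2
      split_ifs with h
      · have : 0 ≤ w e * (1 - z e) := mul_nonneg hwe (by linarith)
        have := mul_nonneg h1κ.le this
        linarith
      · obtain ⟨v, hv, hvK⟩ := Finset.not_subset.mp h
        have hlt : x v < κ / (1 + κ) := by simpa using hvK
        have h2 : z e < κ / (1 + κ) := lt_of_le_of_lt (hzx e he v hv) hlt
        rw [lt_div_iff₀ h1κ] at h2
        have := mul_nonneg hwe (show 0 ≤ κ - z e * (1 + κ) by linarith)
        linarith
    rw [Finset.sum_sub_distrib, ← Finset.mul_sum, Finset.sum_sub_distrib,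
      ← Finset.sum_filter] at key
    unfold inducedWeight
    unfold totalWeight at hcov ⊢
    refine key.trans ?_
    rw [mul_assoc]
    exact mul_le_mul_of_nonneg_left (by linarith) h1κ.le
  · have hsum : ∑ v, x v ≤ (r : ℝ) := by
      have h := hopt (fun v => if v ∈ O then 1 else 0) (fun e => if e ⊆ O then 1 else 0) ?_
      · simpa [hOcard] using h
      · refine ⟨?_, ?_, ?_, ?_⟩
        · intro v
          dsimp only
          split_ifs <;> simp
        · intro e _
          dsimp only
          split_ifs <;> simp
        · intro e _ v hv
          dsimp only
          by_cases h : e ⊆ O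
          · simp [h, h hv]
          · simp only [h, if_false]
            split_ifs <;> simp
        · simpa [inducedWeight, Finset.sum_filter] using hOcov
    have hcard : ((Finset.univ.filter (fun v => κ / (1 + κ) ≤ x v)).card : ℝ) * (κ / (1 + κ))
        ≤ ∑ v, x v := by
      rw [← nsmul_eq_mul]
      refine (Finset.card_nsmul_le_sum _ x _ ?_).trans ?_
      · intro v hv
        simpa using hv
      · exact Finset.sum_le_sum_of_subset_of_nonneg (Finset.filter_subset _ _)
          (fun v _ _ => (hx v).1)
    have h3 := hcard.trans hsum
    rw [← le_div_iff₀ (by positivity)] at h3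
    refine h3.trans (le_of_eq ?_)
    field_simp
    try ring
end

section
/- Let H = (V, 𝓔) be a finite weighted hypergraph and let λ ≥ 0. Consider the minimization of Σ_{v∈V} x_v − λ · Σ_{e∈𝓔} w_e z_e over all x : V → [0,1] and z : 𝓔 → [0,1] satisfying z_e ≤ x_v for every e ∈ 𝓔 and every v ∈ e. Then the minimum is attained at a solution with x_v ∈ {0,1} for all v and z_e ∈ {0,1} for all e; in particular, the minimum value equals min_{K ⊆ V} (|K| − λ · e(K)). -/
open Finset

open MeasureTheory in
lemma thr_integrable (a : ℝ) :
    Integrable ((Set.Iic a).indicator (fun _ => (1:ℝ))) (volume.restrict (Set.Ioc (0:ℝ) 1)) :=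
  (integrable_const (1:ℝ)).indicator measurableSet_Iic

open MeasureTheory in
lemma thr_integral (a : ℝ) (ha : a ∈ Set.Icc (0:ℝ) 1) :
    ∫ t in Set.Ioc (0:ℝ) 1, (Set.Iic a).indicator (fun _ => (1:ℝ)) t = a := by
  have h : Set.Iic a ∩ Set.Ioc (0:ℝ) 1 = Set.Ioc 0 a := by
    ext t
    simp only [Set.mem_inter_iff, Set.mem_Iic, Set.mem_Ioc]
    have := ha.2
    constructor
    · rintro ⟨h1, h2, h3⟩
      exact ⟨h2, h1⟩
    · rintro ⟨h1, h2⟩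
      exact ⟨h2, h1, h2.trans this⟩
  rw [integral_indicator_const _ measurableSet_Iic, measureReal_restrict_apply measurableSet_Iic, h]
  simp [ha.1]

open MeasureTheory in
lemma thr_bound {V : Type*} [Fintype V] [DecidableEq V]
    (𝓔 : Finset (Finset V)) (w : Finset V → ℝ) (hw : ∀ e ∈ 𝓔, 0 ≤ w e)
    (lam : ℝ) (hlam : 0 ≤ lam) (M : ℝ)
    (hM : ∀ K : Finset V, M ≤ (K.card : ℝ) - lam * inducedWeight 𝓔 w K)
    (x : V → ℝ) (z : Finset V → ℝ)
    (hx : ∀ v, x v ∈ Set.Icc (0:ℝ) 1)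
    (hz : ∀ e ∈ 𝓔, z e ∈ Set.Icc (0:ℝ) 1)
    (hxz : ∀ e ∈ 𝓔, ∀ v ∈ e, z e ≤ x v) :
    M ≤ (∑ v, x v) - lam * ∑ e ∈ 𝓔, w e * z e := by
  let g : ℝ → ℝ → ℝ := fun a => (Set.Iic a).indicator (fun _ => (1:ℝ))
  have i1 : Integrable (fun t => ∑ v, g (x v) t) (volume.restrict (Set.Ioc (0:ℝ) 1)) :=
    integrable_finsetSum _ (fun v _ => thr_integrable (x v))
  have i2 : Integrable (fun t => ∑ e ∈ 𝓔, w e * g (z e) t)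
      (volume.restrict (Set.Ioc (0:ℝ) 1)) :=
    integrable_finsetSum _ (fun e _ => (thr_integrable (z e)).const_mul (w e))
  have hI : ∫ t in Set.Ioc (0:ℝ) 1, ((∑ v, g (x v) t) - lam * ∑ e ∈ 𝓔, w e * g (z e) t)
      = (∑ v, x v) - lam * ∑ e ∈ 𝓔, w e * z e := by
    rw [integral_sub i1 (i2.const_mul lam), integral_const_mul,
      integral_finsetSum _ (fun v _ => thr_integrable (x v)),
      integral_finsetSum _ (fun e _ => (thr_integrable (z e)).const_mul (w e))]
    congr 1
    · exact Finset.sum_congr rfl (fun v _ => thr_integral _ (hx v))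
    · congr 1
      refine Finset.sum_congr rfl (fun e he => ?_)
      rw [integral_const_mul]
      congr 1
      exact thr_integral _ (hz e he)
  have hc : ∫ _t in Set.Ioc (0:ℝ) 1, M = M := by simp
  rw [← hI, ← hc]
  refine integral_mono (integrable_const M) (i1.sub (i2.const_mul lam)) (fun t => ?_)
  refine (hM (Finset.univ.filter (fun v => t ≤ x v))).trans ?_
  refine sub_le_sub (le_of_eq ?_) (mul_le_mul_of_nonneg_left ?_ hlam)
  · simp [g, Set.indicator_apply]
  · rw [inducedWeight, Finset.sum_filter]
    refine Finset.sum_le_sum (fun e he => ?_)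
    by_cases h : t ≤ z e
    · have : e ⊆ Finset.univ.filter (fun v => t ≤ x v) := fun v hv => by
        simpa using h.trans (hxz e he v hv)
      rw [if_pos this]
      simp [g, h]
    · simp only [g, Set.indicator_apply, Set.mem_Iic, h, if_false, mul_zero]
      split_ifs
      · exact hw e he
      · exact le_rfl

/-- integrality of the Lagrangian relaxation (Lemma 4 /
`charikar2000greedy`): the Lagrangian LP attains its minimum at a 0/1 solution,
and the minimum value is `min_{K ⊆ V} (|K| - λ·e(K))`. -/
theorem lagrangian_integrality {V : Type*} [Fintype V] [DecidableEq V]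
    (𝓔 : Finset (Finset V)) (w : Finset V → ℝ) (hw : ∀ e ∈ 𝓔, 0 ≤ w e)
    (lam : ℝ) (hlam : 0 ≤ lam) :
    ∃ K : Finset V,
      -- the integral solution given by the indicators of `K` has objective
      -- value `|K| - λ·e(K)` ...
      ((∑ v, (if v ∈ K then (1:ℝ) else 0)) -
          lam * ∑ e ∈ 𝓔, w e * (if e ⊆ K then (1:ℝ) else 0)
        = (K.card : ℝ) - lam * inducedWeight 𝓔 w K) ∧
      -- ... this value is a lower bound on the objective of every feasible
      -- fractional solution (hence the minimum is attained at the 0/1 point) ...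
      (∀ (x : V → ℝ) (z : Finset V → ℝ),
        (∀ v, x v ∈ Set.Icc (0:ℝ) 1) →
        (∀ e ∈ 𝓔, z e ∈ Set.Icc (0:ℝ) 1) →
        (∀ e ∈ 𝓔, ∀ v ∈ e, z e ≤ x v) →
        (K.card : ℝ) - lam * inducedWeight 𝓔 w K ≤
          (∑ v, x v) - lam * ∑ e ∈ 𝓔, w e * z e) ∧
      -- ... and `K` minimizes `|K'| - λ·e(K')` over all subsets `K' ⊆ V`.
      (∀ K' : Finset V,
        (K.card : ℝ) - lam * inducedWeight 𝓔 w K ≤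
          (K'.card : ℝ) - lam * inducedWeight 𝓔 w K') := by
  obtain ⟨K, hK⟩ := Finite.exists_min
    (fun K : Finset V => (K.card : ℝ) - lam * inducedWeight 𝓔 w K)
  refine ⟨K, ?_, ?_, hK⟩
  · simp [inducedWeight, Finset.sum_filter]
  · intro x z hx hz hxz
    exact thr_bound 𝓔 w hw lam hlam _ hK x z hx hz hxz
end

section
/- Let H = (V, 𝓔) be a finite weighted hypergraph and for λ ≥ 0 and K ⊆ V define Φ(K, λ) = |K| − λ · e(K). Then for any 0 ≤ λ₁ < λ₂ there exist sets K₁, K₂ ⊆ V such that K₁ minimizes Φ(·, λ₁) over all subsets of V, K₂ minimizes Φ(·, λ₂) over all subsets of V, and K₁ ⊆ K₂. -/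
open Finset

/-- The Lagrangian objective `Φ(K, λ) = |K| - λ·e(K)`. -/
noncomputable def lagObj {V : Type*} [DecidableEq V]
    (𝓔 : Finset (Finset V)) (w : Finset V → ℝ) (K : Finset V) (lam : ℝ) : ℝ :=
  (K.card : ℝ) - lam * inducedWeight 𝓔 w K

lemma inducedWeight_mono_aux {V : Type*} [DecidableEq V]
    (𝓔 : Finset (Finset V)) (w : Finset V → ℝ) (hw : ∀ e ∈ 𝓔, 0 ≤ w e)
    {A B : Finset V} (h : A ⊆ B) : inducedWeight 𝓔 w A ≤ inducedWeight 𝓔 w B := by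
  unfold inducedWeight
  apply Finset.sum_le_sum_of_subset_of_nonneg
  · intro e he
    rw [Finset.mem_filter] at he ⊢
    exact ⟨he.1, he.2.trans h⟩
  · intro e he _
    exact hw e (Finset.mem_filter.1 he).1

lemma inducedWeight_supermod_aux {V : Type*} [DecidableEq V]
    (𝓔 : Finset (Finset V)) (w : Finset V → ℝ) (hw : ∀ e ∈ 𝓔, 0 ≤ w e)
    (A B : Finset V) : inducedWeight 𝓔 w A + inducedWeight 𝓔 w B ≤
      inducedWeight 𝓔 w (A ∪ B) + inducedWeight 𝓔 w (A ∩ B) := by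
  unfold inducedWeight
  simp only [Finset.sum_filter]
  rw [← Finset.sum_add_distrib, ← Finset.sum_add_distrib]
  apply Finset.sum_le_sum
  intro e he
  have h0 := hw e he
  have hA : e ⊆ A → e ⊆ A ∪ B := fun h => h.trans Finset.subset_union_left
  have hB : e ⊆ B → e ⊆ A ∪ B := fun h => h.trans Finset.subset_union_right
  have hI : e ⊆ A ∩ B ↔ e ⊆ A ∧ e ⊆ B := Finset.subset_inter_iff
  by_cases a : e ⊆ A <;> by_cases b : e ⊆ B <;> by_cases c : e ⊆ A ∪ B <;>
    simp_all

/-- nestedness of Lagrangian minimizers (Lemma "Nested Solutions"). -/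
theorem nested_lagrangian_minimizers {V : Type*} [Fintype V] [DecidableEq V]
    (𝓔 : Finset (Finset V)) (w : Finset V → ℝ) (hw : ∀ e ∈ 𝓔, 0 ≤ w e)
    (lam₁ lam₂ : ℝ) (h₁ : 0 ≤ lam₁) (h₁₂ : lam₁ < lam₂) :
    ∃ K₁ K₂ : Finset V,
      (∀ K : Finset V, lagObj 𝓔 w K₁ lam₁ ≤ lagObj 𝓔 w K lam₁) ∧
      (∀ K : Finset V, lagObj 𝓔 w K₂ lam₂ ≤ lagObj 𝓔 w K lam₂) ∧
      K₁ ⊆ K₂ := by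
  obtain ⟨A, hA⟩ := Finite.exists_min (fun K : Finset V => lagObj 𝓔 w K lam₁)
  obtain ⟨B, hB⟩ := Finite.exists_min (fun K : Finset V => lagObj 𝓔 w K lam₂)
  refine ⟨A, A ∪ B, hA, fun K => le_trans ?_ (hB K), Finset.subset_union_left⟩
  have h := hA (A ∩ B)
  have hm := inducedWeight_mono_aux 𝓔 w hw (Finset.inter_subset_left : A ∩ B ⊆ A)
  have hs := inducedWeight_supermod_aux 𝓔 w hw A B
  have hc : ((A ∪ B).card : ℝ) + (A ∩ B).card = A.card + B.card := by
    exact_mod_cast Finset.card_union_add_card_inter A B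
  simp only [lagObj] at h ⊢
  have h2 := mul_le_mul_of_nonneg_left hs (h₁.trans h₁₂.le)
  have h3 := mul_nonneg (sub_nonneg.2 h₁₂.le) (sub_nonneg.2 hm)
  linarith
end

section
/- Let H = (V, 𝓔) be a finite weighted hypergraph with total weight W. Then there exists a family {x(τ)}_{τ∈[0,1]} where for each τ, x(τ) : V → [0,1] is (together with z_e(τ) = min_{v∈e} x_v(τ)) an optimal solution of the conformal-subgraph LP at coverage parameter ε = 1 − τ, and such that for every vertex v ∈ V the map τ ↦ x_v(τ) is nondecreasing on [0,1]. -/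
open Finset

/-- `z_e = min_{v ∈ e} x_v` (with the convention `1` for an empty hyperedge). -/
noncomputable def minOnEdge {V : Type*} (x : V → ℝ) (e : Finset V) : ℝ :=
  if h : e.Nonempty then e.inf' h x else 1

section helpers

variable {V : Type*} [DecidableEq V]

lemma inducedWeight_eq (𝓔 : Finset (Finset V)) (w : Finset V → ℝ) (K : Finset V) :
    inducedWeight 𝓔 w K = ∑ e ∈ 𝓔, w e * (if e ⊆ K then 1 else 0) := by
  simp [inducedWeight, Finset.sum_filter]

lemma inducedWeight_supermod (𝓔 : Finset (Finset V)) (w : Finset V → ℝ)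
    (hw : ∀ e ∈ 𝓔, 0 ≤ w e) (S K : Finset V) :
    inducedWeight 𝓔 w S + inducedWeight 𝓔 w K ≤
      inducedWeight 𝓔 w (S ∪ K) + inducedWeight 𝓔 w (S ∩ K) := by
  simp only [inducedWeight_eq, ← Finset.sum_add_distrib, ← mul_add]
  refine Finset.sum_le_sum fun e he => mul_le_mul_of_nonneg_left ?_ (hw e he)
  by_cases h1 : e ⊆ S <;> by_cases h2 : e ⊆ K
  · simp [h1, h2, Finset.subset_inter_iff, h1.trans Finset.subset_union_left]
  · simp [h1, h2, Finset.subset_inter_iff, h1.trans Finset.subset_union_left]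
  · simp [h1, h2, Finset.subset_inter_iff, h2.trans Finset.subset_union_right]
  · rw [if_neg h1, if_neg h2, add_zero]
    refine add_nonneg ?_ ?_ <;> split_ifs <;> norm_num

lemma inducedWeight_le_total (𝓔 : Finset (Finset V)) (w : Finset V → ℝ)
    (hw : ∀ e ∈ 𝓔, 0 ≤ w e) (K : Finset V) :
    inducedWeight 𝓔 w K ≤ totalWeight 𝓔 w :=
  Finset.sum_le_sum_of_subset_of_nonneg (Finset.filter_subset _ _) fun e he _ => hw e he

lemma inducedWeight_nonneg (𝓔 : Finset (Finset V)) (w : Finset V → ℝ)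
    (hw : ∀ e ∈ 𝓔, 0 ≤ w e) (K : Finset V) :
    0 ≤ inducedWeight 𝓔 w K :=
  Finset.sum_nonneg fun e he => hw e (Finset.mem_filter.1 he).1

lemma le_minOnEdge {x : V → ℝ} {e : Finset V} {θ : ℝ} (hθ : θ ≤ 1) :
    θ ≤ minOnEdge x e ↔ ∀ v ∈ e, θ ≤ x v := by
  unfold minOnEdge
  split_ifs with h
  · simp
  · rw [Finset.not_nonempty_iff_eq_empty] at h
    simp [h, hθ]

lemma minOnEdge_mem {x : V → ℝ} (hx : ∀ v, x v ∈ Set.Icc (0:ℝ) 1) (e : Finset V) :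
    minOnEdge x e ∈ Set.Icc (0:ℝ) 1 := by
  refine ⟨(le_minOnEdge zero_le_one).2 fun v _ => (hx v).1, ?_⟩
  unfold minOnEdge
  split_ifs with h
  · obtain ⟨v, hv⟩ := h
    exact (Finset.inf'_le _ hv).trans (hx v).2
  · exact le_rfl

lemma step_intervalIntegrable (a : ℝ) :
    IntervalIntegrable (fun θ : ℝ => if θ ≤ a then (1:ℝ) else 0) MeasureTheory.volume 0 1 := by
  apply AntitoneOn.intervalIntegrable
  intro s _ t _ hst
  dsimp only
  split_ifs with h1 h2 h2 <;> first | (exfalso; linarith) | norm_num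

lemma step_integral {a : ℝ} (ha : a ∈ Set.Icc (0:ℝ) 1) :
    ∫ θ in (0:ℝ)..1, (if θ ≤ a then (1:ℝ) else 0) = a := by
  have := intervalIntegral.integral_indicator (f := fun _ : ℝ => (1:ℝ))
    (μ := MeasureTheory.volume) ha
  simpa [Set.indicator_apply] using this

/-- layer-cake bound -/
lemma layer_cake [Fintype V] (𝓔 : Finset (Finset V)) (w : Finset V → ℝ) (l c : ℝ)
    (h : ∀ S, inducedWeight 𝓔 w S - l * (S.card : ℝ) ≤ c)
    (x : V → ℝ) (hx : ∀ v, x v ∈ Set.Icc (0:ℝ) 1) :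
    ∑ e ∈ 𝓔, w e * minOnEdge x e - l * ∑ v, x v ≤ c := by
  have hI1 : ∀ e ∈ 𝓔, IntervalIntegrable
      (fun θ : ℝ => w e * (if θ ≤ minOnEdge x e then (1:ℝ) else 0)) MeasureTheory.volume 0 1 :=
    fun e _ => (step_intervalIntegrable _).const_mul _
  have hI2 : ∀ v ∈ (Finset.univ : Finset V), IntervalIntegrable
      (fun θ : ℝ => (if θ ≤ x v then (1:ℝ) else 0)) MeasureTheory.volume 0 1 :=
    fun e _ => step_intervalIntegrable _
  have hJ1 : IntervalIntegrable (fun θ : ℝ => ∑ e ∈ 𝓔,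
      w e * (if θ ≤ minOnEdge x e then (1:ℝ) else 0)) MeasureTheory.volume 0 1 := by
    simpa only [Finset.sum_fn] using IntervalIntegrable.sum 𝓔 hI1
  have hJ2 : IntervalIntegrable (fun θ : ℝ => l * ∑ v,
      (if θ ≤ x v then (1:ℝ) else 0)) MeasureTheory.volume 0 1 := by
    simpa only [Finset.sum_apply] using (IntervalIntegrable.sum Finset.univ hI2).const_mul l
  have e1 : ∫ θ in (0:ℝ)..1, ((∑ e ∈ 𝓔, w e * (if θ ≤ minOnEdge x e then (1:ℝ) else 0))
      - l * ∑ v, (if θ ≤ x v then (1:ℝ) else 0))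
      = ∑ e ∈ 𝓔, w e * minOnEdge x e - l * ∑ v, x v := by
    rw [intervalIntegral.integral_sub hJ1 hJ2, intervalIntegral.integral_finsetSum hI1,
      intervalIntegral.integral_const_mul, intervalIntegral.integral_finsetSum hI2]
    congr 1
    · refine Finset.sum_congr rfl fun e _ => ?_
      rw [intervalIntegral.integral_const_mul, step_integral (minOnEdge_mem hx e)]
    · congr 1
      exact Finset.sum_congr rfl fun v _ => step_integral (hx v)
  rw [← e1]
  have e2 : ∫ θ in (0:ℝ)..1, c = c := by simp
  rw [← e2]
  refine intervalIntegral.integral_mono_on zero_le_one (hJ1.sub hJ2) (by simp) ?_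
  intro θ hθ
  refine le_trans (le_of_eq ?_) (h (Finset.univ.filter fun v => θ ≤ x v))
  rw [inducedWeight_eq]
  congr 1
  · refine Finset.sum_congr rfl fun e _ => ?_
    congr 1
    have : θ ≤ minOnEdge x e ↔ e ⊆ Finset.univ.filter fun v => θ ≤ x v := by
      rw [le_minOnEdge hθ.2]
      simp [Finset.subset_iff]
    simp only [this]
  · simp

lemma chain_step [Fintype V] (𝓔 : Finset (Finset V)) (w : Finset V → ℝ)
    (hw : ∀ e ∈ 𝓔, 0 ≤ w e) (K : Finset V) (l' : ℝ)
    (hK : ∀ S, inducedWeight 𝓔 w S - l' * (S.card : ℝ) ≤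
      inducedWeight 𝓔 w K - l' * (K.card : ℝ))
    (hlt : inducedWeight 𝓔 w K < totalWeight 𝓔 w) :
    ∃ L, K ⊂ L ∧ ∃ l : ℝ, 0 < l ∧
      inducedWeight 𝓔 w L - inducedWeight 𝓔 w K = l * ((L.card : ℝ) - K.card) ∧
      ∀ S, inducedWeight 𝓔 w S - l * (S.card : ℝ) ≤
        inducedWeight 𝓔 w K - l * (K.card : ℝ) := by
  set f := inducedWeight 𝓔 w with hf
  have hV : f Finset.univ = totalWeight 𝓔 w := by
    simp [hf, inducedWeight, totalWeight]
  have hKV : K ⊂ Finset.univ := by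
    rw [Finset.ssubset_univ_iff]
    rintro rfl
    exact hlt.ne hV
  have hcard : ∀ L, K ⊂ L → (0:ℝ) < (L.card : ℝ) - K.card := fun L hL => by
    have := Finset.card_lt_card hL
    rw [sub_pos]; exact_mod_cast this
  obtain ⟨L, hL, hmax⟩ := Finset.exists_max_image
    (Finset.univ.filter fun L : Finset V => K ⊂ L)
    (fun L => (f L - f K) / ((L.card : ℝ) - K.card)) ⟨Finset.univ, by simpa using hKV⟩
  simp only [Finset.mem_filter, Finset.mem_univ, true_and] at hL hmax
  set l := (f L - f K) / ((L.card : ℝ) - K.card) with hl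
  have hLeq : f L - f K = l * ((L.card : ℝ) - K.card) := by
    rw [hl, div_mul_cancel₀ _ (hcard L hL).ne']
  have hlpos : 0 < l := by
    refine lt_of_lt_of_le ?_ (hmax _ hKV)
    exact div_pos (by rw [hV]; linarith) (hcard _ hKV)
  have hll : l ≤ l' := by
    have := hK L
    have h2 : f L - f K ≤ l' * ((L.card : ℝ) - K.card) := by linarith
    rw [hLeq] at h2
    exact le_of_mul_le_mul_right h2 (hcard L hL)
  refine ⟨L, hL, l, hlpos, hLeq, fun S => ?_⟩
  have h1 : f S + f K ≤ f (S ∪ K) + f (S ∩ K) := inducedWeight_supermod 𝓔 w hw S K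
  have h2 : f (S ∪ K) - f K ≤ l * (((S ∪ K).card : ℝ) - K.card) := by
    by_cases hE : K = S ∪ K
    · rw [← hE]; simp
    · have hss : K ⊂ S ∪ K := lt_of_le_of_ne Finset.subset_union_right hE
      have := hmax _ hss
      rwa [div_le_iff₀ (hcard _ hss)] at this
  have h3 := hK (S ∩ K)
  have h4 : ((S ∪ K).card : ℝ) + (S ∩ K).card = S.card + K.card := by
    exact_mod_cast Finset.card_union_add_card_inter S K
  have h5 : ((S ∩ K).card : ℝ) ≤ K.card := by
    exact_mod_cast Finset.card_le_card Finset.inter_subset_right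
  have h6 : (l' - l) * ((S ∩ K).card : ℝ) ≤ (l' - l) * K.card :=
    mul_le_mul_of_nonneg_left h5 (by linarith)
  have h7 : ((S ∪ K).card : ℝ) = S.card + K.card - (S ∩ K).card := by linarith
  rw [h7] at h2
  nlinarith

lemma chain_family [Fintype V] (𝓔 : Finset (Finset V)) (w : Finset V → ℝ)
    (hw : ∀ e ∈ 𝓔, 0 ≤ w e) (n : ℕ) : ∀ (K : Finset V) (l' : ℝ),
    Fintype.card V - K.card ≤ n → 0 < l' →
    (∀ S, inducedWeight 𝓔 w S - l' * (S.card : ℝ) ≤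
      inducedWeight 𝓔 w K - l' * (K.card : ℝ)) →
    ∃ x : ℝ → V → ℝ,
      (∀ t ∈ Set.Icc (inducedWeight 𝓔 w K) (totalWeight 𝓔 w),
        (∀ v, x t v ∈ Set.Icc (0:ℝ) 1) ∧ (∀ v ∈ K, x t v = 1) ∧
        t ≤ ∑ e ∈ 𝓔, w e * minOnEdge (x t) e ∧
        ∀ x' : V → ℝ, (∀ v, x' v ∈ Set.Icc (0:ℝ) 1) →
          t ≤ ∑ e ∈ 𝓔, w e * minOnEdge x' e → ∑ v, x t v ≤ ∑ v, x' v) ∧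
      (∀ v : V, ∀ t₁ ∈ Set.Icc (inducedWeight 𝓔 w K) (totalWeight 𝓔 w),
        ∀ t₂ ∈ Set.Icc (inducedWeight 𝓔 w K) (totalWeight 𝓔 w),
        t₁ ≤ t₂ → x t₁ v ≤ x t₂ v) := by
  have hmin : ∀ K : Finset V, inducedWeight 𝓔 w K ≤
      ∑ e ∈ 𝓔, w e * minOnEdge (fun v => if v ∈ K then (1:ℝ) else 0) e := by
    intro K
    rw [inducedWeight_eq]
    refine Finset.sum_le_sum fun e he => mul_le_mul_of_nonneg_left ?_ (hw e he)
    refine (le_minOnEdge (by split_ifs <;> norm_num)).2 fun v hv => ?_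
    by_cases h : e ⊆ K
    · simp [h, h hv]
    · rw [if_neg h]; split_ifs <;> norm_num
  induction n with
  | zero =>
    intro K l' hn hl' hK
    have hKu : K = Finset.univ := by
      rw [← Finset.card_eq_iff_eq_univ]
      have := Finset.card_le_univ K
      omega
    have hV : inducedWeight 𝓔 w K = totalWeight 𝓔 w := by
      simp [hKu, inducedWeight, totalWeight]
    refine ⟨fun _ v => if v ∈ K then (1:ℝ) else 0, ?_, fun _ _ _ _ _ _ => le_rfl⟩
    intro t ht
    refine ⟨fun v => ?_, fun v hv => by simp [hv], (ht.2.trans hV.ge).trans (hmin K), ?_⟩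
    · dsimp only; split_ifs <;> simp
    · intro x' hx' htx'
      have := layer_cake 𝓔 w l' _ hK x' hx'
      have h2 : l' * (K.card : ℝ) ≤ l' * ∑ v, x' v := by linarith [ht.1]
      simpa using le_of_mul_le_mul_left h2 hl'
  | succ n ih =>
    intro K l' hn hl' hK
    rcases (inducedWeight_le_total 𝓔 w hw K).eq_or_lt with hV | hlt
    · refine ⟨fun _ v => if v ∈ K then (1:ℝ) else 0, ?_, fun _ _ _ _ _ _ => le_rfl⟩
      intro t ht
      refine ⟨fun v => ?_, fun v hv => by simp [hv], (ht.2.trans hV.ge).trans (hmin K), ?_⟩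
      · dsimp only; split_ifs <;> simp
      · intro x' hx' htx'
        have := layer_cake 𝓔 w l' _ hK x' hx'
        have h2 : l' * (K.card : ℝ) ≤ l' * ∑ v, x' v := by linarith [ht.1]
        simpa using le_of_mul_le_mul_left h2 hl'
    · obtain ⟨L, hKL, l, hl, hLeq, hKl⟩ := chain_step 𝓔 w hw K l' hK hlt
      have hcl := Finset.card_lt_card hKL
      have hclr : (0:ℝ) < (L.card : ℝ) - K.card := by
        rw [sub_pos]; exact_mod_cast hcl
      obtain ⟨y, hy, hymono⟩ := ih L l (by omega) hl (fun S => by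
        have := hKl S
        linarith)
      set a := inducedWeight 𝓔 w K with ha
      set b := inducedWeight 𝓔 w L with hb
      have hab : 0 < b - a := by rw [hLeq]; positivity
      set p : ℝ → V → ℝ := fun t v => if v ∈ K then 1 else
        if v ∈ L then (t - a) / (b - a) else 0 with hp
      have hs : ∀ t, a ≤ t → t ≤ b → (t - a) / (b - a) ∈ Set.Icc (0:ℝ) 1 := fun t h1 h2 =>
        ⟨div_nonneg (by linarith) hab.le, (div_le_one hab).2 (by linarith)⟩
      have hpI : ∀ t, a ≤ t → t ≤ b → ∀ v, p t v ∈ Set.Icc (0:ℝ) 1 := by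
        intro t h1 h2 v
        simp only [hp]
        split_ifs
        · simp
        · exact hs t h1 h2
        · simp
      have hpL : ∀ t v, v ∉ L → p t v = 0 := by
        intro t v hv
        have : v ∉ K := fun h => hv (hKL.1 h)
        simp [hp, hv, this]
      have hpsum : ∀ t, ∑ v, p t v = K.card + (t - a) / l := by
        intro t
        have h1 : ∀ v, p t v = (if v ∈ K then (1:ℝ) else 0) +
            (if v ∈ L \ K then (t - a) / (b - a) else 0) := by
          intro v
          by_cases h1 : v ∈ K <;> by_cases h2 : v ∈ L <;> simp [hp, h1, h2]
        simp only [h1, Finset.sum_add_distrib]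
        rw [Finset.sum_ite_mem, Finset.sum_ite_mem]
        simp only [Finset.univ_inter, Finset.sum_const, nsmul_eq_mul, mul_one]
        rw [Finset.cast_card_sdiff hKL.1, hLeq]
        field_simp
      have hpg : ∀ t, a ≤ t → t ≤ b → t ≤ ∑ e ∈ 𝓔, w e * minOnEdge (p t) e := by
        intro t h1 h2
        obtain ⟨hs0, hs1⟩ := hs t h1 h2
        set s := (t - a) / (b - a) with hsdef
        have ht : t = (1 - s) * a + s * b := by
          have : s * (b - a) = t - a := div_mul_cancel₀ _ hab.ne'
          linarith
        have : (1 - s) * a + s * b = ∑ e ∈ 𝓔, w e *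
            ((1 - s) * (if e ⊆ K then 1 else 0) + s * (if e ⊆ L then 1 else 0)) := by
          rw [ha, hb, inducedWeight_eq, inducedWeight_eq, Finset.mul_sum, Finset.mul_sum,
            ← Finset.sum_add_distrib]
          exact Finset.sum_congr rfl fun e _ => by ring
        refine (ht.trans this).le.trans ?_
        refine Finset.sum_le_sum fun e he => mul_le_mul_of_nonneg_left ?_ (hw e he)
        by_cases hK' : e ⊆ K
        · have hL' : e ⊆ L := hK'.trans hKL.1
          simp only [hK', hL', if_true]
          refine (le_minOnEdge (by linarith)).2 fun v hv => ?_
          simp [hp, hK' hv]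
        · by_cases hL' : e ⊆ L
          · simp only [hK', hL', if_true, if_false]
            refine (le_minOnEdge (by linarith)).2 fun v hv => ?_
            simp only [hp, hL' hv, if_true]
            split_ifs <;> linarith
          · simp only [hK', hL', if_false]
            simpa using (minOnEdge_mem (hpI t h1 h2) e).1
      refine ⟨fun t => if t ≤ b then p t else y t, ?_, ?_⟩
      · intro t ht
        by_cases htb : t ≤ b
        · simp only [htb, if_true]
          refine ⟨hpI t ht.1 htb, fun v hv => by simp [hp, hv], hpg t ht.1 htb, ?_⟩
          intro x' hx' htx'
          have := layer_cake 𝓔 w l _ hKl x' hx'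
          rw [hpsum]
          have h2 : l * (K.card + (t - a) / l) ≤ l * ∑ v, x' v := by
            rw [mul_add, mul_div_cancel₀ _ hl.ne']
            linarith
          exact le_of_mul_le_mul_left h2 hl
        · simp only [htb, if_false]
          obtain ⟨q1, q2, q3, q4⟩ := hy t ⟨(not_le.1 htb).le, ht.2⟩
          exact ⟨q1, fun v hv => q2 v (hKL.1 hv), q3, q4⟩
      · intro v t₁ h1 t₂ h2 h12
        dsimp only
        by_cases hb1 : t₁ ≤ b <;> by_cases hb2 : t₂ ≤ b
        · simp only [hb1, hb2, if_true, hp]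
          split_ifs
          · exact le_rfl
          · exact div_le_div_of_nonneg_right (by linarith) hab.le
          · exact le_rfl
        · simp only [hb1, hb2, if_true, if_false]
          obtain ⟨q1, q2, -, -⟩ := hy t₂ ⟨(not_le.1 hb2).le, h2.2⟩
          by_cases hv : v ∈ L
          · rw [q2 v hv]; exact (hpI t₁ h1.1 hb1 v).2
          · rw [hpL t₁ v hv]; exact (q1 v).1
        · exact absurd (h12.trans hb2) hb1
        · simp only [hb1, hb2, if_false]
          exact hymono v t₁ ⟨(not_le.1 hb1).le, h1.2⟩ t₂ ⟨(not_le.1 hb2).le, h2.2⟩ h12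

end helpers

/-- monotone family of optimal LP solutions: there is a family
`{x(τ)}_{τ ∈ [0,1]}` of optimal LP solutions (with `z_e = min_{v∈e} x_v`) at
coverage parameter `ε = 1 - τ`, such that every coordinate `τ ↦ x_v(τ)` is
nondecreasing on `[0,1]`. -/
theorem monotone_optimal_lp_family {V : Type*} [Fintype V] [DecidableEq V]
    (𝓔 : Finset (Finset V)) (w : Finset V → ℝ) (hw : ∀ e ∈ 𝓔, 0 ≤ w e) :
    ∃ x : ℝ → V → ℝ,
      (∀ τ ∈ Set.Icc (0:ℝ) 1,
        LPFeasible 𝓔 w (1 - τ) (x τ) (minOnEdge (x τ)) ∧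
        ∀ (x' : V → ℝ) (z' : Finset V → ℝ),
          LPFeasible 𝓔 w (1 - τ) x' z' → ∑ v, x τ v ≤ ∑ v, x' v) ∧
      (∀ v : V, ∀ τ₁ ∈ Set.Icc (0:ℝ) 1, ∀ τ₂ ∈ Set.Icc (0:ℝ) 1,
        τ₁ ≤ τ₂ → x τ₁ v ≤ x τ₂ v) := by
  have hW0 : 0 ≤ totalWeight 𝓔 w := Finset.sum_nonneg hw
  have h0W := inducedWeight_le_total 𝓔 w hw ∅
  have h00 := inducedWeight_nonneg 𝓔 w hw ∅
  obtain ⟨X, hX, hmono⟩ := chain_family 𝓔 w hw (Fintype.card V) ∅ (totalWeight 𝓔 w + 1)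
    (by simp) (by linarith) (by
      intro S
      rcases S.eq_empty_or_nonempty with rfl | hS
      · exact le_rfl
      · have h1 : (1:ℝ) ≤ S.card := by exact_mod_cast hS.card_pos
        have h2 := inducedWeight_le_total 𝓔 w hw S
        simp only [Finset.card_empty, Nat.cast_zero, mul_zero, sub_zero]
        nlinarith)
  have hmem : ∀ τ ∈ Set.Icc (0:ℝ) 1, max (τ * totalWeight 𝓔 w) (inducedWeight 𝓔 w ∅) ∈
      Set.Icc (inducedWeight 𝓔 w ∅) (totalWeight 𝓔 w) := fun τ hτ =>
    ⟨le_max_right _ _, max_le (by nlinarith [hτ.2]) h0W⟩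
  refine ⟨fun τ => X (max (τ * totalWeight 𝓔 w) (inducedWeight 𝓔 w ∅)), ?_, ?_⟩
  · intro τ hτ
    obtain ⟨q1, -, q3, q4⟩ := hX _ (hmem τ hτ)
    refine ⟨⟨q1, fun e _ => minOnEdge_mem q1 e, fun e _ v hv => ?_, ?_⟩, ?_⟩
    · exact (le_minOnEdge (minOnEdge_mem q1 e).2).1 le_rfl v hv
    · rw [sub_sub_cancel]
      exact (le_max_left _ _).trans q3
    · rintro x' z' ⟨r1, r2, r3, r4⟩
      rw [sub_sub_cancel] at r4
      refine q4 x' r1 (max_le (r4.trans ?_) ?_)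
      · exact Finset.sum_le_sum fun e he => mul_le_mul_of_nonneg_left
          ((le_minOnEdge (r2 e he).2).2 (r3 e he)) (hw e he)
      · rw [inducedWeight_eq]
        refine Finset.sum_le_sum fun e he => mul_le_mul_of_nonneg_left ?_ (hw e he)
        by_cases h : e ⊆ ∅
        · rw [if_pos h]
          refine (le_minOnEdge le_rfl).2 fun v hv => absurd (h hv) (by simp)
        · rw [if_neg h]; exact (minOnEdge_mem r1 e).1
  · intro v τ₁ h1 τ₂ h2 h12
    exact hmono v _ (hmem τ₁ h1) _ (hmem τ₂ h2)
      (max_le_max (mul_le_mul_of_nonneg_right h12 hW0) le_rfl)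
end

section
/- Let X₁, …, X_{n+1} be exchangeable real-valued random variables on a probability space, let φ ∈ (0,1), and set k = ⌈φ(n+1)⌉. Assume k ≤ n and let Q be the k-th smallest value among X₁, …, X_n. Then ℙ(X_{n+1} ≤ Q) ≥ φ. -/
open MeasureTheory

/-- The `k`-th smallest value among `a 0, …, a (n-1)` (the `k`-th order
statistic, for `1 ≤ k ≤ n`): the least `q` such that at least `k` of the
values are `≤ q`. -/
noncomputable def kthSmallest {n : ℕ} {α : Type*} [ConditionallyCompleteLinearOrder α]
    (a : Fin n → α) (k : ℕ) : α :=
  sInf {q : α | k ≤ (Finset.univ.filter (fun i => a i ≤ q)).card}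



lemma cq_card {n : ℕ} (x : Fin (n + 1) → ℝ) (k : ℕ) (hk : k ≤ n) :
    k ≤ (Finset.univ.filter (fun j =>
      (Finset.univ.filter (fun i => x i < x j)).card < k)).card := by
  classical
  have hm := Tuple.monotone_sort x
  set σ := Tuple.sort x
  have h1 : ((Finset.univ.filter (fun m : Fin (n + 1) => (m : ℕ) < k)).image σ) ⊆
      Finset.univ.filter (fun j =>
      (Finset.univ.filter (fun i => x i < x j)).card < k) := by
    intro j hj
    simp only [Finset.mem_image, Finset.mem_filter, Finset.mem_univ, true_and] at hj ⊢
    obtain ⟨m, hmk, rfl⟩ := hj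
    have h2 : Finset.univ.filter (fun i => x i < x (σ m)) ⊆ (Finset.Iio m).image σ := by
      intro i hi
      simp only [Finset.mem_image, Finset.mem_filter, Finset.mem_univ, true_and,
        Finset.mem_Iio] at hi ⊢
      refine ⟨σ.symm i, ?_, by simp⟩
      by_contra hc
      have := hm (not_lt.mp hc)
      simp only [Function.comp, Equiv.apply_symm_apply] at this
      linarith
    have h3 := (Finset.card_le_card h2).trans Finset.card_image_le
    rw [Fin.card_Iio] at h3
    omega
  have h4 := Finset.card_le_card h1
  rw [Finset.card_image_of_injective _ σ.injective] at h4
  refine le_trans ?_ h4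
  have h5 : Finset.univ.filter (fun m : Fin (n + 1) => (m : ℕ) < k) =
      Finset.Iio (⟨k, by omega⟩ : Fin (n + 1)) := by
    ext m; simp [Fin.lt_def]
  rw [h5, Fin.card_Iio]

lemma cq_le {n : ℕ} (x : Fin (n + 1) → ℝ) (k : ℕ) (hk : k ≤ n)
    (h : (Finset.univ.filter (fun i => x i < x (Fin.last n))).card < k) :
    x (Fin.last n) ≤ kthSmallest (fun i : Fin n => x i.castSucc) k := by
  classical
  unfold kthSmallest
  apply le_csInf
  · obtain ⟨M, hM⟩ := (Set.finite_range (fun i : Fin n => x i.castSucc)).bddAbove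
    refine ⟨M, ?_⟩
    have : Finset.univ.filter (fun i : Fin n => x i.castSucc ≤ M) = Finset.univ :=
      Finset.filter_true_of_mem (fun i _ => hM ⟨i, rfl⟩)
    simp only [Set.mem_ofPred_eq, this]
    simpa using hk
  · intro q hq
    by_contra hc
    push Not at hc
    simp only [Set.mem_ofPred_eq] at hq
    have h1 : (Finset.univ.filter (fun i : Fin n => x i.castSucc ≤ q)).image Fin.castSucc ⊆
        Finset.univ.filter (fun i => x i < x (Fin.last n)) := by
      intro i hi
      simp only [Finset.mem_image, Finset.mem_filter, Finset.mem_univ, true_and] at hi ⊢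
      obtain ⟨m, hm, rfl⟩ := hi
      exact hm.trans_lt hc
    have h2 := Finset.card_le_card h1
    rw [Finset.card_image_of_injective _ (Fin.castSucc_injective n)] at h2
    omega

lemma cq_meas {n : ℕ} (k : ℕ) (j : Fin (n + 1)) :
    MeasurableSet {x : Fin (n + 1) → ℝ |
      (Finset.univ.filter (fun i => x i < x j)).card < k} := by
  simp only [Finset.card_filter]
  apply measurableSet_lt _ measurable_const
  refine Finset.measurable_sum _ (fun i _ => ?_)
  exact Measurable.ite (measurableSet_lt (measurable_pi_apply i) (measurable_pi_apply j))
    measurable_const measurable_const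

/-- the split conformal quantile lemma. If `X₁, …, X_{n+1}` are
exchangeable real random variables, `φ ∈ (0,1)`, `k = ⌈φ(n+1)⌉ ≤ n`, and `Q`
is the `k`-th smallest among `X₁, …, X_n`, then `ℙ(X_{n+1} ≤ Q) ≥ φ`. -/
theorem conformal_quantile {Ω : Type*} [MeasurableSpace Ω]
    (ℙ : Measure Ω) [IsProbabilityMeasure ℙ]
    (n : ℕ) (X : Fin (n + 1) → Ω → ℝ) (hmeas : ∀ i, Measurable (X i))
    (hexch : ∀ σ : Equiv.Perm (Fin (n + 1)),
      Measure.map (fun ω => fun i => X (σ i) ω) ℙ =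
        Measure.map (fun ω => fun i => X i ω) ℙ)
    (φ : ℝ) (hφ : φ ∈ Set.Ioo (0:ℝ) 1)
    (k : ℕ) (hk : k = ⌈φ * (n + 1)⌉₊) (hkn : k ≤ n) :
    ENNReal.ofReal φ ≤
      ℙ {ω | X (Fin.last n) ω ≤
        kthSmallest (fun i : Fin n => X i.castSucc ω) k} := by
  classical
  set E : Fin (n + 1) → Set (Fin (n + 1) → ℝ) := fun j =>
    {x | (Finset.univ.filter (fun i => x i < x j)).card < k} with hE
  set ν := Measure.map (fun ω => fun i => X i ω) ℙ with hν
  have hX : Measurable (fun ω => fun i => X i ω) := measurable_pi_lambda _ hmeas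
  have hprob : IsProbabilityMeasure ν := Measure.isProbabilityMeasure_map hX.aemeasurable
  have hsym : ∀ j, ν (E j) = ν (E (Fin.last n)) := by
    intro j
    have hs := hexch (Equiv.swap j (Fin.last n))
    conv_rhs => rw [← hs]
    rw [Measure.map_apply (measurable_pi_lambda _ fun i => hmeas _) (cq_meas k _),
      Measure.map_apply (measurable_pi_lambda _ fun i => hmeas _) (cq_meas k _)]
    congr 1
    ext ω
    simp only [hE, Set.mem_preimage, Set.mem_ofPred_eq, Equiv.swap_apply_right]
    have : (Finset.univ.filter (fun i => X i ω < X j ω)).card =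
        (Finset.univ.filter (fun i => X (Equiv.swap j (Fin.last n) i) ω < X j ω)).card := by
      simp only [Finset.card_filter]
      exact (Equiv.sum_comp (Equiv.swap j (Fin.last n))
        (fun i => if X i ω < X j ω then 1 else 0)).symm
    rw [this]
  have hsum : (k : ENNReal) ≤ ∑ j, ν (E j) := by
    calc (k : ENNReal) = ∫⁻ _, (k : ENNReal) ∂ν := by simp
      _ ≤ ∫⁻ x, ∑ j, (E j).indicator 1 x ∂ν := by
        apply lintegral_mono
        intro x
        have := cq_card x k hkn
        rw [Finset.card_filter] at this
        have h2 : (k : ENNReal) ≤ ((∑ j, if (Finset.univ.filter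
          (fun i => x i < x j)).card < k then 1 else 0 : ℕ) : ENNReal) := by
          exact_mod_cast this
        refine h2.trans (le_of_eq ?_)
        push_cast
        refine Finset.sum_congr rfl fun j _ => ?_
        simp [hE, Set.indicator_apply]
      _ = ∑ j, ν (E j) := by
        rw [lintegral_finsetSum _ (fun j _ => measurable_one.indicator (cq_meas k j))]
        exact Finset.sum_congr rfl fun j _ => lintegral_indicator_one (cq_meas k j)
  simp only [hsym, Finset.sum_const, Finset.card_univ, Fintype.card_fin, nsmul_eq_mul] at hsum
  have hle : ν (E (Fin.last n)) ≤ ℙ {ω | X (Fin.last n) ω ≤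
        kthSmallest (fun i : Fin n => X i.castSucc ω) k} := by
    rw [hν, Measure.map_apply hX (cq_meas k _)]
    exact measure_mono fun ω hω => cq_le (fun i => X i ω) k hkn hω
  refine le_trans ?_ hle
  have hfin : ν (E (Fin.last n)) ≠ ⊤ := measure_ne_top _ _
  rw [ENNReal.ofReal_le_iff_le_toReal hfin]
  have h6 := ENNReal.toReal_mono (ENNReal.mul_ne_top (ENNReal.natCast_ne_top _) hfin) hsum
  rw [ENNReal.toReal_mul, ENNReal.toReal_natCast, ENNReal.toReal_natCast] at h6
  push_cast at h6
  have h7 : φ * (n + 1) ≤ k := by rw [hk]; exact Nat.le_ceil _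
  have h8 : (0 : ℝ) < n + 1 := by positivity
  nlinarith
end

section
/- Let 𝒳 be a measurable space and let S₁ ⊆ S₂ ⊆ ⋯ ⊆ S_k be fixed measurable subsets of 𝒳 with S_k = 𝒳. Let Y₁, …, Y_{m+1} be exchangeable 𝒳-valued random variables. For each i define η_i = min{ j ∈ {1,…,k} : Y_i ∈ S_j } (well-defined since S_k = 𝒳). Let φ ∈ (0,1), set t = ⌈φ(m+1)⌉, assume t ≤ m, and let j* be the t-th smallest value among η₁, …, η_m. Then ℙ(Y_{m+1} ∈ S_{j*}) ≥ φ. -/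
open MeasureTheory

/-- The index score `η = min { j ∈ {1,…,k} : y ∈ S j }` of a point `y` with
respect to the nested family `S 1 ⊆ ⋯ ⊆ S k` (well-defined when `S k = univ`). -/
noncomputable def nestedIndex {𝒳 : Type*} (S : ℕ → Set 𝒳) (k : ℕ) (y : 𝒳) : ℕ :=
  sInf {j : ℕ | 1 ≤ j ∧ j ≤ k ∧ y ∈ S j}

/-- number of entries strictly below entry `i` -/
def rankBelow {n : ℕ} (e : Fin n → ℕ) (i : Fin n) : ℕ :=
  (Finset.univ.filter (fun j => e j < e i)).card

lemma le_card_rankBelow {n : ℕ} (e : Fin n → ℕ) (t : ℕ) (ht : t ≤ n) :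
    t ≤ (Finset.univ.filter (fun i => rankBelow e i < t)).card := by
  by_cases hB : (Finset.univ.filter (fun i => t ≤ rankBelow e i)).Nonempty
  · obtain ⟨i, hi, hmin⟩ := Finset.exists_min_image _ e hB
    have hi' : t ≤ rankBelow e i := by simpa using hi
    refine hi'.trans (Finset.card_le_card ?_)
    intro j hj
    simp only [Finset.mem_filter, Finset.mem_univ, true_and] at hj hmin ⊢
    by_contra h
    exact absurd (hmin j (not_lt.mp h)) (not_le.mpr hj)
  · have : (Finset.univ.filter (fun i => rankBelow e i < t)) = Finset.univ := by
      ext i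
      simp only [Finset.mem_filter, Finset.mem_univ, true_and, iff_true]
      by_contra h
      exact hB ⟨i, by simpa using h⟩
    rw [this]; simpa using ht

lemma rankBelow_perm {n : ℕ} (e : Fin n → ℕ) (σ : Equiv.Perm (Fin n)) (i : Fin n) :
    rankBelow (fun j => e (σ j)) i = rankBelow e (σ i) := by
  unfold rankBelow
  refine Finset.card_bij (fun j _ => σ j) ?_ ?_ ?_
  · intro j hj; simpa using hj
  · intro a _ b _ h; exact σ.injective h
  · intro b hb; exact ⟨σ.symm b, by simpa using hb, by simp⟩

lemma nestedIndex_spec {𝒳 : Type*} (S : ℕ → Set 𝒳) (k : ℕ) (hk : 1 ≤ k)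
    (hSk : S k = Set.univ) (y : 𝒳) :
    1 ≤ nestedIndex S k y ∧ nestedIndex S k y ≤ k ∧ y ∈ S (nestedIndex S k y) :=
  Nat.sInf_mem (s := {j : ℕ | 1 ≤ j ∧ j ≤ k ∧ y ∈ S j}) ⟨k, hk, le_rfl, by simp [hSk]⟩

lemma measurable_nestedIndex {𝒳 : Type*} [MeasurableSpace 𝒳] (S : ℕ → Set 𝒳) (k : ℕ)
    (hk : 1 ≤ k) (hSk : S k = Set.univ) (hSmeas : ∀ j, MeasurableSet (S j)) :
    Measurable (nestedIndex S k) := by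
  refine measurable_of_Iic fun n => ?_
  have : nestedIndex S k ⁻¹' Set.Iic n =
      ⋃ j ∈ {j : ℕ | 1 ≤ j ∧ j ≤ k ∧ j ≤ n}, S j := by
    ext y
    simp only [Set.mem_preimage, Set.mem_Iic, Set.mem_iUnion, Set.mem_ofPred_eq, exists_prop]
    constructor
    · intro h
      obtain ⟨h1, h2, h3⟩ := nestedIndex_spec S k hk hSk y
      exact ⟨_, ⟨h1, h2, h⟩, h3⟩
    · rintro ⟨j, ⟨h1, h2, h3⟩, h4⟩
      exact (Nat.sInf_le (⟨h1, h2, h4⟩ : j ∈ {j : ℕ | 1 ≤ j ∧ j ≤ k ∧ y ∈ S j})).trans h3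
  rw [this]
  exact MeasurableSet.biUnion (Set.to_countable _) fun j _ => hSmeas j

/-- validity of split conformal prediction over a fixed nested
family `S 1 ⊆ S 2 ⊆ ⋯ ⊆ S k = 𝒳` of measurable candidate prediction sets. -/
theorem split_conformal_nested_family {Ω 𝒳 : Type*}
    [MeasurableSpace Ω] [MeasurableSpace 𝒳]
    (ℙ : Measure Ω) [IsProbabilityMeasure ℙ]
    (k : ℕ) (hk : 1 ≤ k) (S : ℕ → Set 𝒳)
    (hSmeas : ∀ j, MeasurableSet (S j))
    (hSmono : ∀ i j, 1 ≤ i → i ≤ j → j ≤ k → S i ⊆ S j)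
    (hSk : S k = Set.univ)
    (m : ℕ) (Y : Fin (m + 1) → Ω → 𝒳) (hmeas : ∀ i, Measurable (Y i))
    (hexch : ∀ σ : Equiv.Perm (Fin (m + 1)),
      Measure.map (fun ω => fun i => Y (σ i) ω) ℙ =
        Measure.map (fun ω => fun i => Y i ω) ℙ)
    (φ : ℝ) (hφ : φ ∈ Set.Ioo (0:ℝ) 1)
    (t : ℕ) (ht : t = ⌈φ * (m + 1)⌉₊) (htm : t ≤ m) :
    ENNReal.ofReal φ ≤
      ℙ {ω | Y (Fin.last m) ω ∈
        S (kthSmallest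
            (fun i : Fin m => nestedIndex S k (Y i.castSucc ω)) t)} := by
  classical
  have hspec := nestedIndex_spec S k hk hSk
  have hE := measurable_nestedIndex S k hk hSk hSmeas
  let G : Fin (m + 1) → Set (Fin (m + 1) → 𝒳) :=
    fun i => {y | rankBelow (fun j => nestedIndex S k (y j)) i < t}
  have hG : ∀ i, MeasurableSet (G i) := by
    intro i
    have h1 : Measurable (fun (y : Fin (m + 1) → 𝒳) => fun j => nestedIndex S k (y j)) :=
      measurable_pi_lambda _ fun j => hE.comp (measurable_pi_apply j)
    exact h1 (MeasurableSet.of_discrete (s := {e : Fin (m + 1) → ℕ | rankBelow e i < t}))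
  have hY : ∀ σ : Equiv.Perm (Fin (m + 1)), Measurable (fun ω => fun i => Y (σ i) ω) :=
    fun σ => measurable_pi_lambda _ fun j => hmeas _
  have hY1 : Measurable (fun ω => fun i => Y i ω) := measurable_pi_lambda _ fun j => hmeas _
  let A : Fin (m + 1) → Set Ω := fun i => {ω | (fun j => Y j ω) ∈ G i}
  have hA : ∀ i, MeasurableSet (A i) := fun i => hY1 (hG i)
  have hAeq : ∀ i, ℙ (A i) = ℙ (A (Fin.last m)) := by
    intro i
    have h := congrArg (fun μ => μ (G (Fin.last m))) (hexch (Equiv.swap i (Fin.last m)))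
    beta_reduce at h
    rw [Measure.map_apply (hY _) (hG _), Measure.map_apply hY1 (hG _)] at h
    refine Eq.trans ?_ h
    congr 1
    ext ω
    have := rankBelow_perm (fun j => nestedIndex S k (Y j ω))
      (Equiv.swap i (Fin.last m)) (Fin.last m)
    rw [Equiv.swap_apply_right] at this
    simp only [A, G, Set.mem_ofPred_eq, Set.mem_preimage]
    rw [this]
  have hsum : (t : ENNReal) ≤ (m + 1 : ℕ) * ℙ (A (Fin.last m)) := by
    calc (t : ENNReal) = ∫⁻ _, (t : ENNReal) ∂ℙ := by simp
      _ ≤ ∫⁻ ω, ∑ i, (A i).indicator 1 ω ∂ℙ := by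
        refine lintegral_mono fun ω => ?_
        have h := le_card_rankBelow (fun j => nestedIndex S k (Y j ω)) t (by omega)
        have h2 : ∑ i, (A i).indicator (1 : Ω → ENNReal) ω =
            ((Finset.univ.filter (fun i => rankBelow
              (fun j => nestedIndex S k (Y j ω)) i < t)).card : ENNReal) := by
          rw [Finset.card_filter]
          push_cast
          refine Finset.sum_congr rfl fun i _ => ?_
          simp [Set.indicator_apply, A, G]
        rw [h2]
        exact Nat.cast_le.mpr h
      _ = ∑ i, ℙ (A i) := by
        rw [lintegral_finsetSum _ fun i _ => measurable_one.indicator (hA i)]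
        exact Finset.sum_congr rfl fun i _ => lintegral_indicator_one (hA i)
      _ = _ := by
        rw [Finset.sum_congr rfl fun i _ => hAeq i]
        simp
  have hφA : ENNReal.ofReal φ ≤ ℙ (A (Fin.last m)) := by
    have h1 : ENNReal.ofReal φ * (m + 1 : ℕ) ≤ (t : ENNReal) := by
      rw [← ENNReal.ofReal_natCast, ← ENNReal.ofReal_natCast, ← ENNReal.ofReal_mul hφ.1.le]
      refine ENNReal.ofReal_le_ofReal ?_
      rw [ht]
      push_cast
      exact Nat.le_ceil _
    have h2 := h1.trans hsum
    rw [mul_comm] at h2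
    exact (ENNReal.mul_le_mul_iff_right (by simp) (ENNReal.natCast_ne_top _)).mp h2
  refine hφA.trans (measure_mono ?_)
  intro ω hω
  simp only [A, G, Set.mem_ofPred_eq] at hω ⊢
  set e : Fin (m + 1) → ℕ := fun j => nestedIndex S k (Y j ω) with he
  have hkmem : k ∈ {q : ℕ | t ≤ (Finset.univ.filter
      (fun i : Fin m => nestedIndex S k (Y i.castSucc ω) ≤ q)).card} := by
    have : (Finset.univ.filter
      (fun i : Fin m => nestedIndex S k (Y i.castSucc ω) ≤ k)) = Finset.univ := by
      ext i; simp [(hspec _).2.1]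
    simp only [Set.mem_ofPred_eq, this]
    simpa using htm
  have hle : kthSmallest (fun i : Fin m => nestedIndex S k (Y i.castSucc ω)) t ≤ k :=
    Nat.sInf_le hkmem
  have hmem : t ≤ (Finset.univ.filter (fun i : Fin m => nestedIndex S k (Y i.castSucc ω) ≤
      kthSmallest (fun i : Fin m => nestedIndex S k (Y i.castSucc ω)) t)).card :=
    Nat.sInf_mem ⟨k, hkmem⟩
  generalize kthSmallest (fun i : Fin m => nestedIndex S k (Y i.castSucc ω)) t = q at *
  have hq : e (Fin.last m) ≤ q := by
    by_contra hlt
    push Not at hlt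
    refine absurd hω (not_lt.mpr (hmem.trans ?_))
    unfold rankBelow
    refine Finset.card_le_card_of_injOn Fin.castSucc ?_ (Fin.castSucc_injective m).injOn
    intro i hi
    simp only [Finset.coe_filter, Finset.mem_univ, true_and, Set.mem_ofPred_eq] at hi ⊢
    exact lt_of_le_of_lt hi hlt
  exact hSmono _ _ (hspec _).1 hq hle (hspec _).2.2
end

section
/- Let H = (V, 𝓔) be a finite weighted hypergraph with total weight W > 0, and for λ ≥ 0 define L(λ) = min_{K ⊆ V} (|K| − λ · e(K)). Then L is a concave, piecewise-linear, nonincreasing function of λ on [0, ∞), and for every τ ∈ [0,1] with ε = 1 − τ, the optimal value of the conformal-subgraph LP at coverage parameter ε equals max_{λ ≥ 0} ( L(λ) + λ·τ·W ), and this maximum is attained at some λ* ≥ 0. -/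
open Finset

/-- The Lagrangian dual function `L(λ) = min_{K ⊆ V} (|K| - λ·e(K))`. -/
noncomputable def lagDual {V : Type*} [Fintype V] [DecidableEq V]
    (𝓔 : Finset (Finset V)) (w : Finset V → ℝ) (lam : ℝ) : ℝ :=
  ⨅ K : Finset V, ((K.card : ℝ) - lam * inducedWeight 𝓔 w K)

theorem aux_pairs {ι : Type*} [Fintype ι] [DecidableEq ι] (c n : ι → ℝ)
    (i₀ : ι) (hi₀ : c i₀ ≤ 0) :
    ∃ lam : ℝ, 0 ≤ lam ∧ ∃ (i j : ι) (s : ℝ), 0 ≤ s ∧ s ≤ 1 ∧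
      s * c i + (1 - s) * c j ≤ 0 ∧ ∀ k, s * n i + (1 - s) * n j ≤ n k + lam * c k := by
  classical
  let s : ι × ι → ℝ := fun p => if c p.2 ≤ 0 then 1 else c p.2 / (c p.2 - c p.1)
  let val : ι × ι → ℝ := fun p => s p * n p.1 + (1 - s p) * n p.2
  obtain ⟨⟨i, j⟩, hij, hmin⟩ := Finset.exists_min_image
    ((Finset.univ : Finset (ι × ι)).filter (fun p => c p.1 ≤ 0)) val ⟨(i₀, i₀), by simpa using hi₀⟩
  simp only [Finset.mem_filter, Finset.mem_univ, true_and] at hij hmin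
  set P := val (i, j) with hP
  have hA : ∀ k, c k ≤ 0 → P ≤ n k := by
    intro k hk
    have := hmin (k, k) hk
    simpa [val, s, hk] using this
  have hAB : ∀ k l, c k ≤ 0 → 0 < c l → P * (c l - c k) ≤ n k * c l - n l * c k := by
    intro k l hk hl
    have h := hmin (k, l) hk
    have hd : 0 < c l - c k := by linarith
    have e : val (k, l) = (n k * c l - n l * c k) / (c l - c k) := by
      simp only [val, s, not_le.mpr hl, if_false]
      field_simp
      ring
    rw [e, le_div_iff₀ hd] at h
    exact h
  let B : Finset ℝ := insert 0 (((Finset.univ : Finset ι).filter (fun l => 0 < c l)).image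
    (fun l => (P - n l) / c l))
  obtain ⟨lam, hlB, hmax⟩ := Finset.exists_max_image B id ⟨0, by simp [B]⟩
  have hl0 : 0 ≤ lam := hmax 0 (by simp [B])
  refine ⟨lam, hl0, i, j, s (i, j), ?_, ?_, ?_, ?_⟩
  · by_cases h : c j ≤ 0
    · simp [s, h]
    · simp only [s, h, if_false]
      push Not at h
      exact div_nonneg h.le (by linarith)
  · by_cases h : c j ≤ 0
    · simp [s, h]
    · simp only [s, h, if_false]
      push Not at h
      rw [div_le_one (by linarith)]
      linarith
  · by_cases h : c j ≤ 0
    · simp [s, h, hij]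
    · simp only [s, h, if_false]
      push Not at h
      have hd : c j - c i ≠ 0 := by linarith
      apply le_of_eq
      field_simp
      ring
  · intro k
    change P ≤ _
    rcases le_or_gt (c k) 0 with hk | hk
    · simp only [B, Finset.mem_insert, Finset.mem_image, Finset.mem_filter, Finset.mem_univ,
        true_and] at hlB
      rcases hlB with h | ⟨l, hl, h⟩
      · subst h
        have := hA k hk
        linarith
      · have h1 := hAB k l hk hl
        have h2 : lam * c l = P - n l := by
          rw [← h]; field_simp
        have h3 : 0 ≤ (n k + lam * c k - P) * c l := by
          have : (n k + lam * c k - P) * c l = n k * c l + (lam * c l) * c k - P * c l := by ring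
          rw [this, h2]
          nlinarith
        have := nonneg_of_mul_nonneg_left h3 hl
        linarith
    · have h := hmax ((P - n k) / c k) (by
        simp only [B, Finset.mem_insert, Finset.mem_image, Finset.mem_filter, Finset.mem_univ,
          true_and]
        exact Or.inr ⟨k, hk, rfl⟩)
      simp only [id] at h
      rw [div_le_iff₀ hk] at h
      linarith

theorem lagDual_le_aux {V : Type*} [Fintype V] [DecidableEq V]
    (𝓔 : Finset (Finset V)) (w : Finset V → ℝ) (lam : ℝ) (K : Finset V) :
    lagDual 𝓔 w lam ≤ (K.card : ℝ) - lam * inducedWeight 𝓔 w K :=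
  ciInf_le (Set.finite_range _).bddBelow K

theorem integral_step_aux (a : ℝ) (ha : a ∈ Set.Icc (0:ℝ) 1) :
    IntervalIntegrable (fun t : ℝ => if t ≤ a then (1:ℝ) else 0) MeasureTheory.volume 0 1 ∧
    ∫ t in (0:ℝ)..1, (if t ≤ a then (1:ℝ) else 0) = a := by
  have e : (fun t : ℝ => if t ≤ a then (1:ℝ) else 0) = (Set.Iic a).indicator (fun _ => 1) := by
    ext t
    simp [Set.indicator]
  constructor
  · apply Antitone.intervalIntegrable
    intro s t hst
    dsimp only
    split_ifs with h1 h2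
    · exact le_rfl
    · exact absurd (hst.trans h1) h2
    · exact zero_le_one
    · exact le_rfl
  · rw [e]
    have := intervalIntegral.integral_indicator (μ := MeasureTheory.volume)
      (f := fun _ : ℝ => (1:ℝ)) ha
    have e2 : (Set.Iic a) = {x | x ≤ a} := rfl
    rw [e2, this]
    simp

theorem weak_aux {V : Type*} [Fintype V] [DecidableEq V]
    (𝓔 : Finset (Finset V)) (w : Finset V → ℝ) (hw : ∀ e ∈ 𝓔, 0 ≤ w e)
    (x : V → ℝ) (z : Finset V → ℝ) (hx : ∀ v, x v ∈ Set.Icc (0:ℝ) 1)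
    (hz : ∀ e ∈ 𝓔, z e ∈ Set.Icc (0:ℝ) 1) (hzx : ∀ e ∈ 𝓔, ∀ v ∈ e, z e ≤ x v)
    (lam : ℝ) (hl : 0 ≤ lam) :
    lagDual 𝓔 w lam ≤ ∑ v, x v - lam * ∑ e ∈ 𝓔, w e * z e := by
  have key : ∀ t : ℝ, lagDual 𝓔 w lam ≤ ∑ v, (if t ≤ x v then (1:ℝ) else 0)
      - lam * ∑ e ∈ 𝓔, w e * (if t ≤ z e then (1:ℝ) else 0) := by
    intro t
    refine (lagDual_le_aux 𝓔 w lam (Finset.univ.filter (fun v => t ≤ x v))).trans ?_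
    have h1 : (((Finset.univ.filter (fun v => t ≤ x v)).card : ℕ) : ℝ) =
        ∑ v, (if t ≤ x v then (1:ℝ) else 0) := by simp
    rw [h1]
    apply sub_le_sub_left
    apply mul_le_mul_of_nonneg_left _ hl
    rw [inducedWeight, Finset.sum_filter]
    apply Finset.sum_le_sum
    intro e he
    have hwe := hw e he
    by_cases h : t ≤ z e
    · have hs : e ⊆ Finset.univ.filter (fun v => t ≤ x v) := by
        intro v hv
        simpa using h.trans (hzx e he v hv)
      rw [if_pos hs, if_pos h, mul_one]
    · rw [if_neg h, mul_zero]
      split_ifs <;> simp [hwe]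
  have i1 : IntervalIntegrable (fun t : ℝ => ∑ v, (if t ≤ x v then (1:ℝ) else 0))
      MeasureTheory.volume 0 1 := by
    have := IntervalIntegrable.sum Finset.univ (fun v _ => (integral_step_aux (x v) (hx v)).1)
    have e := Finset.sum_fn Finset.univ (fun v (t : ℝ) => if t ≤ x v then (1:ℝ) else 0)
    rw [e] at this
    exact this
  have i2 : IntervalIntegrable (fun t : ℝ => ∑ e ∈ 𝓔, w e * (if t ≤ z e then (1:ℝ) else 0))
      MeasureTheory.volume 0 1 := by
    have := IntervalIntegrable.sum 𝓔
      (fun e he => (integral_step_aux (z e) (hz e he)).1.const_mul (w e))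
    have e := Finset.sum_fn 𝓔 (fun e (t : ℝ) => w e * (if t ≤ z e then (1:ℝ) else 0))
    rw [e] at this
    exact this
  have h := intervalIntegral.integral_mono_on (zero_le_one (α := ℝ))
    (intervalIntegrable_const (μ := MeasureTheory.volume)) (i1.sub (i2.const_mul lam))
    (fun t _ => key t)
  rw [intervalIntegral.integral_sub i1 (i2.const_mul lam), intervalIntegral.integral_const_mul,
    intervalIntegral.integral_finsetSum (fun v _ => (integral_step_aux (x v) (hx v)).1),
    intervalIntegral.integral_finsetSum
      (fun e he => (integral_step_aux (z e) (hz e he)).1.const_mul (w e))] at h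
  rw [Finset.sum_congr rfl (fun v _ => (integral_step_aux (x v) (hx v)).2)] at h
  have e3 : ∑ e ∈ 𝓔, ∫ t in (0:ℝ)..1, w e * (if t ≤ z e then (1:ℝ) else 0)
      = ∑ e ∈ 𝓔, w e * z e := by
    apply Finset.sum_congr rfl
    intro e he
    rw [intervalIntegral.integral_const_mul, (integral_step_aux (z e) (hz e he)).2]
  rw [e3] at h
  simpa using h

/-- the Lagrangian dual `L` is concave, piecewise-linear
(an infimum of finitely many affine functions) and nonincreasing on `[0,∞)`,
and strong duality holds: for every `τ ∈ [0,1]` the optimal LP value at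
coverage `ε = 1 - τ` equals `max_{λ ≥ 0} (L(λ) + λτW)`, attained at some
`λ* ≥ 0`. -/
theorem lagrangian_dual_properties {V : Type*} [Fintype V] [DecidableEq V]
    (𝓔 : Finset (Finset V)) (w : Finset V → ℝ) (hw : ∀ e ∈ 𝓔, 0 ≤ w e)
    (hW : 0 < totalWeight 𝓔 w) :
    ConcaveOn ℝ (Set.Ici 0) (lagDual 𝓔 w) ∧
    AntitoneOn (lagDual 𝓔 w) (Set.Ici 0) ∧
    (∃ (N : ℕ) (a b : Fin N → ℝ), 0 < N ∧
      ∀ lam ∈ Set.Ici (0:ℝ), lagDual 𝓔 w lam = ⨅ i, (a i * lam + b i)) ∧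
    (∀ τ ∈ Set.Icc (0:ℝ) 1, ∃ lam : ℝ, 0 ≤ lam ∧
      (∀ lam' : ℝ, 0 ≤ lam' →
        lagDual 𝓔 w lam' + lam' * τ * totalWeight 𝓔 w ≤
          lagDual 𝓔 w lam + lam * τ * totalWeight 𝓔 w) ∧
      sInf {y : ℝ | ∃ (x : V → ℝ) (z : Finset V → ℝ),
          LPFeasible 𝓔 w (1 - τ) x z ∧ y = ∑ v, x v} =
        lagDual 𝓔 w lam + lam * τ * totalWeight 𝓔 w) := by
  have hind : ∀ K, 0 ≤ inducedWeight 𝓔 w K := fun K =>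
    Finset.sum_nonneg (fun e he => hw e (Finset.mem_filter.mp he).1)
  refine ⟨⟨convex_Ici 0, ?_⟩, ?_, ?_, ?_⟩
  · intro p _ q _ a b ha hb hab
    apply le_ciInf
    intro K
    have h1 := mul_le_mul_of_nonneg_left (lagDual_le_aux 𝓔 w p K) ha
    have h2 := mul_le_mul_of_nonneg_left (lagDual_le_aux 𝓔 w q K) hb
    simp only [smul_eq_mul]
    have : (K.card : ℝ) = (a + b) * K.card := by rw [hab, one_mul]
    rw [this]
    linarith
  · intro p _ q _ hpq
    apply le_ciInf
    intro K
    have h1 := lagDual_le_aux 𝓔 w q K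
    have h2 := mul_le_mul_of_nonneg_right hpq (hind K)
    linarith
  · let φ := (Fintype.equivFin (Finset V)).symm
    refine ⟨Fintype.card (Finset V), fun i => - inducedWeight 𝓔 w (φ i),
      fun i => ((φ i).card : ℝ), Fintype.card_pos, ?_⟩
    intro lam _
    rw [lagDual, ← φ.iInf_comp]
    congr 1
    ext i
    ring
  · intro τ hτ
    have hfeas : ∀ lam' : ℝ, 0 ≤ lam' → ∀ x z, LPFeasible 𝓔 w (1 - τ) x z →
        lagDual 𝓔 w lam' + lam' * τ * totalWeight 𝓔 w ≤ ∑ v, x v := by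
      rintro l hl x z ⟨hx, hz, hzx, hc⟩
      have h1 := weak_aux 𝓔 w hw x z hx hz hzx l hl
      have h2 := mul_le_mul_of_nonneg_left hc hl
      have h3 : l * ((1 - (1 - τ)) * totalWeight 𝓔 w) = l * τ * totalWeight 𝓔 w := by ring
      linarith
    obtain ⟨lam, hl, K, J, s, hs0, hs1, hc, hk⟩ := aux_pairs
      (fun K : Finset V => τ * totalWeight 𝓔 w - inducedWeight 𝓔 w K)
      (fun K => (K.card : ℝ)) Finset.univ (by
        have : inducedWeight 𝓔 w Finset.univ = totalWeight 𝓔 w := by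
          simp [inducedWeight, totalWeight]
        rw [this]
        nlinarith [hτ.2])
    let x : V → ℝ := fun v => s * (if v ∈ K then 1 else 0) + (1 - s) * (if v ∈ J then 1 else 0)
    let z : Finset V → ℝ := fun e =>
      s * (if e ⊆ K then 1 else 0) + (1 - s) * (if e ⊆ J then 1 else 0)
    have hxs : ∑ v, x v = s * K.card + (1 - s) * J.card := by
      simp [x, Finset.sum_add_distrib]
      ring
    have hzs : ∑ e ∈ 𝓔, w e * z e = s * inducedWeight 𝓔 w K + (1 - s) * inducedWeight 𝓔 w J := by
      rw [inducedWeight, inducedWeight, Finset.sum_filter, Finset.sum_filter, Finset.mul_sum,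
        Finset.mul_sum, ← Finset.sum_add_distrib]
      apply Finset.sum_congr rfl
      intro e _
      simp only [z]
      split_ifs <;> ring
    have hF : LPFeasible 𝓔 w (1 - τ) x z := by
      refine ⟨?_, ?_, ?_, ?_⟩
      · intro v
        simp only [x, Set.mem_Icc]
        split_ifs <;> constructor <;> linarith
      · intro e _
        simp only [z, Set.mem_Icc]
        split_ifs <;> constructor <;> linarith
      · intro e _ v hv
        simp only [x, z]
        have a1 : (if e ⊆ K then (1:ℝ) else 0) ≤ if v ∈ K then 1 else 0 := by
          by_cases h : e ⊆ K
          · simp [h, h hv]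
          · rw [if_neg h]; split_ifs <;> simp
        have a2 : (if e ⊆ J then (1:ℝ) else 0) ≤ if v ∈ J then 1 else 0 := by
          by_cases h : e ⊆ J
          · simp [h, h hv]
          · rw [if_neg h]; split_ifs <;> simp
        exact add_le_add (mul_le_mul_of_nonneg_left a1 hs0)
          (mul_le_mul_of_nonneg_left a2 (by linarith))
      · rw [hzs]
        linarith
    have hge : ∑ v, x v ≤ lagDual 𝓔 w lam + lam * τ * totalWeight 𝓔 w := by
      rw [hxs]
      have : s * (K.card : ℝ) + (1 - s) * J.card - lam * τ * totalWeight 𝓔 w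
          ≤ lagDual 𝓔 w lam := by
        apply le_ciInf
        intro M
        have := hk M
        linarith
      linarith
    have heq := le_antisymm hge (hfeas lam hl x z hF)
    refine ⟨lam, hl, fun l' hl' => (hfeas l' hl' x z hF).trans hge, ?_⟩
    apply IsLeast.csInf_eq
    refine ⟨⟨x, z, hF, heq.symm⟩, ?_⟩
    rintro y ⟨x', z', hF', rfl⟩
    exact hfeas lam hl x' z' hF'
end

section
/- Let H = (V, 𝓔) be a finite weighted hypergraph with total weight W, let λ ≥ 0, and construct the bipartite flow network with node set {s, t} ∪ {u_e : e ∈ 𝓔} ∪ {n_v : v ∈ V}, an arc (s, u_e) of capacity λ·w_e for each e ∈ 𝓔, an arc (n_v, t) of capacity 1 for each v ∈ V, and an arc (u_e, n_v) of infinite capacity whenever v ∈ e. For K ⊆ V, the s–t cut whose source side is {s} ∪ {u_e : e ⊆ K} ∪ {n_v : v ∈ K} cuts no infinite-capacity arc and has capacity exactly |K| + λ·(W − e(K)); consequently, the minimum over K ⊆ V of Φ(K, λ) = |K| − λ·e(K) equals the minimum cut capacity over all such cuts minus λ·W. -/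
open Finset
open scoped ENNReal

/-- Nodes of the bipartite flow network: the source `s`, the sink `t`, a node
`u_e` for each hyperedge `e`, and a node `n_v` for each vertex `v`. -/
inductive FlowNode (V : Type*) where
  | src : FlowNode V
  | sink : FlowNode V
  | edgeNode : Finset V → FlowNode V
  | vertNode : V → FlowNode V

open Classical in
/-- Arc capacities of the parametric flow network: `cap (s, u_e) = λ·w_e`,
`cap (n_v, t) = 1`, `cap (u_e, n_v) = ∞` whenever `v ∈ e`, and `0` for all
other node pairs. -/
noncomputable def flowCap {V : Type*} (𝓔 : Finset (Finset V))
    (w : Finset V → ℝ) (lam : ℝ) : FlowNode V → FlowNode V → ℝ≥0∞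
  | .src, .edgeNode e => if e ∈ 𝓔 then ENNReal.ofReal (lam * w e) else 0
  | .vertNode _, .sink => 1
  | .edgeNode e, .vertNode v => if e ∈ 𝓔 ∧ v ∈ e then ⊤ else 0
  | _, _ => 0

open Classical in
/-- Capacity of the `s`–`t` cut with source side `X`: the total capacity of
arcs from `X` to its complement. -/
noncomputable def cutCapacity {V : Type*} (cap : FlowNode V → FlowNode V → ℝ≥0∞)
    (X : Set (FlowNode V)) : ℝ≥0∞ :=
  ∑' a : FlowNode V, ∑' b : FlowNode V, if a ∈ X ∧ b ∉ X then cap a b else 0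

/-- The source side of the cut associated with a vertex set `K`:
`{s} ∪ {u_e : e ∈ 𝓔, e ⊆ K} ∪ {n_v : v ∈ K}`. -/
def sourceSide {V : Type*} (𝓔 : Finset (Finset V)) (K : Finset V) :
    Set (FlowNode V) :=
  {FlowNode.src} ∪ (FlowNode.edgeNode '' {e | e ∈ 𝓔 ∧ e ⊆ K}) ∪
    (FlowNode.vertNode '' ↑K)

theorem tsum_flowNode {V : Type*} [Fintype V] [DecidableEq V] (f : FlowNode V → ℝ≥0∞) :
    ∑' a, f a = f .src + f .sink + ∑ e : Finset V, f (.edgeNode e) + ∑ v : V, f (.vertNode v) := by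
  let E : (Unit ⊕ Unit) ⊕ (Finset V ⊕ V) ≃ FlowNode V :=
    { toFun := fun x => match x with
        | .inl (.inl _) => .src
        | .inl (.inr _) => .sink
        | .inr (.inl e) => .edgeNode e
        | .inr (.inr v) => .vertNode v
      invFun := fun x => match x with
        | .src => .inl (.inl ())
        | .sink => .inl (.inr ())
        | .edgeNode e => .inr (.inl e)
        | .vertNode v => .inr (.inr v)
      left_inv := by rintro ((_ | _) | (_ | _)) <;> rfl
      right_inv := by rintro (_ | _ | _ | _) <;> rfl }
  rw [← E.tsum_eq f, tsum_fintype]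
  simp [Fintype.sum_sum_type, E, add_assoc]

theorem src_mem {V : Type*} (𝓔 : Finset (Finset V)) (K : Finset V) :
    FlowNode.src ∈ sourceSide 𝓔 K := by simp [sourceSide]

theorem sink_mem {V : Type*} (𝓔 : Finset (Finset V)) (K : Finset V) :
    FlowNode.sink ∉ sourceSide 𝓔 K := by simp [sourceSide]

theorem edge_mem {V : Type*} (𝓔 : Finset (Finset V)) (K e : Finset V) :
    FlowNode.edgeNode e ∈ sourceSide 𝓔 K ↔ e ∈ 𝓔 ∧ e ⊆ K := by simp [sourceSide]

theorem vert_mem {V : Type*} (𝓔 : Finset (Finset V)) (K : Finset V) (v : V) :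
    FlowNode.vertNode v ∈ sourceSide 𝓔 K ↔ v ∈ K := by simp [sourceSide]

theorem cutCapacity_eq {V : Type*} (cap : FlowNode V → FlowNode V → ℝ≥0∞)
    (X : Set (FlowNode V)) : cutCapacity cap X =
      ∑' a : FlowNode V, ∑' b : FlowNode V,
        @ite _ (a ∈ X ∧ b ∉ X) (Classical.propDecidable _) (cap a b) 0 := by
  unfold cutCapacity
  refine tsum_congr fun a => tsum_congr fun b => ?_
  by_cases h : a ∈ X ∧ b ∉ X
  · rw [if_pos h, if_pos h]
  · rw [if_neg h, if_neg h]

theorem cut_eq {V : Type*} [Fintype V] [DecidableEq V]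
    (𝓔 : Finset (Finset V)) (w : Finset V → ℝ) (hw : ∀ e ∈ 𝓔, 0 ≤ w e)
    (lam : ℝ) (hlam : 0 ≤ lam) (K : Finset V) :
    cutCapacity (flowCap 𝓔 w lam) (sourceSide 𝓔 K) =
        ENNReal.ofReal ((K.card : ℝ) +
          lam * (totalWeight 𝓔 w - inducedWeight 𝓔 w K)) := by
  have hW : totalWeight 𝓔 w - inducedWeight 𝓔 w K = ∑ e ∈ 𝓔.filter (fun e => ¬ e ⊆ K), w e := by
    unfold totalWeight inducedWeight
    rw [← Finset.sum_filter_add_sum_filter_not 𝓔 (fun e => e ⊆ K) w]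
    ring
  have hnn : ∀ e ∈ 𝓔.filter (fun e => ¬ e ⊆ K), 0 ≤ lam * w e := fun e he =>
    mul_nonneg hlam (hw e (Finset.mem_filter.1 he).1)
  rw [hW, Finset.mul_sum, ENNReal.ofReal_add (by positivity) (Finset.sum_nonneg hnn),
    ENNReal.ofReal_sum_of_nonneg hnn, ENNReal.ofReal_natCast]
  rw [cutCapacity_eq, tsum_flowNode]
  have hsrc : (∑' b : FlowNode V, @ite _ (FlowNode.src ∈ sourceSide 𝓔 K ∧ b ∉ sourceSide 𝓔 K)
      (Classical.propDecidable _) (flowCap 𝓔 w lam .src b) 0)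
      = ∑ e ∈ 𝓔.filter (fun e => ¬ e ⊆ K), ENNReal.ofReal (lam * w e) := by
    rw [tsum_flowNode, ← Finset.sum_subset (Finset.subset_univ (𝓔.filter (fun e => ¬ e ⊆ K)))]
    · simp only [flowCap, ite_self, Finset.sum_const_zero, zero_add, add_zero]
      refine Finset.sum_congr rfl fun e he => ?_
      rw [Finset.mem_filter] at he
      rw [if_pos ⟨src_mem _ _, fun h => he.2 ((edge_mem _ _ _).1 h).2⟩, if_pos he.1]
    · intro e _ he
      by_cases h : FlowNode.src ∈ sourceSide 𝓔 K ∧ FlowNode.edgeNode e ∉ sourceSide 𝓔 K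
      · rw [if_pos h]
        have : e ∉ 𝓔 := fun h3 => he (Finset.mem_filter.2
          ⟨h3, fun h4 => h.2 ((edge_mem _ _ _).2 ⟨h3, h4⟩)⟩)
        simp [flowCap, this]
      · rw [if_neg h]
  have hsink : (∑' b : FlowNode V, @ite _ (FlowNode.sink ∈ sourceSide 𝓔 K ∧ b ∉ sourceSide 𝓔 K)
      (Classical.propDecidable _) (flowCap 𝓔 w lam .sink b) 0) = 0 := by
    simp [flowCap]
  have hedge : ∀ e : Finset V, (∑' b : FlowNode V,
      @ite _ (FlowNode.edgeNode e ∈ sourceSide 𝓔 K ∧ b ∉ sourceSide 𝓔 K)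
      (Classical.propDecidable _) (flowCap 𝓔 w lam (.edgeNode e) b) 0) = 0 := by
    intro e
    rw [ENNReal.tsum_eq_zero]
    intro b
    by_cases h : FlowNode.edgeNode e ∈ sourceSide 𝓔 K ∧ b ∉ sourceSide 𝓔 K
    · rw [if_pos h]
      rcases b with _ | _ | e' | v <;> simp only [flowCap]
      rw [if_neg]
      intro h2
      exact h.2 ((vert_mem _ _ _).2 (((edge_mem _ _ _).1 h.1).2 h2.2))
    · rw [if_neg h]
  have hvert : ∀ v : V, (∑' b : FlowNode V,
      @ite _ (FlowNode.vertNode v ∈ sourceSide 𝓔 K ∧ b ∉ sourceSide 𝓔 K)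
      (Classical.propDecidable _) (flowCap 𝓔 w lam (.vertNode v) b) 0)
      = if v ∈ K then 1 else 0 := by
    intro v
    rw [tsum_flowNode]
    simp only [flowCap, ite_self, Finset.sum_const_zero, zero_add, add_zero]
    by_cases h : v ∈ K
    · rw [if_pos ⟨(vert_mem _ _ _).2 h, sink_mem _ _⟩, if_pos h]
    · rw [if_neg (fun h2 => h ((vert_mem _ _ _).1 h2.1)), if_neg h]
  rw [hsrc, hsink, Finset.sum_congr rfl (fun e _ => hedge e),
    Finset.sum_congr rfl (fun v _ => hvert v)]
  simp [add_comm]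

/-- the reduction of the Lagrangian to parametric minimum cut.
For every `K ⊆ V`, the cut with source side
`{s} ∪ {u_e : e ⊆ K} ∪ {n_v : v ∈ K}` cuts no infinite-capacity arc and has
capacity exactly `|K| + λ·(W - e(K))`; consequently
`min_K Φ(K,λ) = (min over such cuts of the cut capacity) - λ·W`. -/
theorem lagrangian_as_parametric_min_cut {V : Type*} [Fintype V] [DecidableEq V]
    (𝓔 : Finset (Finset V)) (w : Finset V → ℝ) (hw : ∀ e ∈ 𝓔, 0 ≤ w e)
    (lam : ℝ) (hlam : 0 ≤ lam) :
    (∀ K : Finset V, ∀ a ∈ sourceSide 𝓔 K, ∀ b ∉ sourceSide 𝓔 K,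
      flowCap 𝓔 w lam a b ≠ ⊤) ∧
    (∀ K : Finset V,
      cutCapacity (flowCap 𝓔 w lam) (sourceSide 𝓔 K) =
        ENNReal.ofReal ((K.card : ℝ) +
          lam * (totalWeight 𝓔 w - inducedWeight 𝓔 w K))) ∧
    (⨅ K : Finset V, ((K.card : ℝ) - lam * inducedWeight 𝓔 w K)) =
      (⨅ K : Finset V, cutCapacity (flowCap 𝓔 w lam) (sourceSide 𝓔 K)).toReal -
        lam * totalWeight 𝓔 w := by
  have hc := cut_eq 𝓔 w hw lam hlam
  refine ⟨?_, hc, ?_⟩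
  · intro K a ha b hb
    rcases a with _ | _ | e | v <;> rcases b with _ | _ | e' | v' <;> simp only [flowCap] <;>
      try simp
    · split_ifs <;> simp
    · intro h1 h2
      exact hb ((vert_mem _ _ _).2 (((edge_mem _ _ _).1 ha).2 h2))
  · rw [ENNReal.toReal_iInf (fun K => by rw [hc K]; exact ENNReal.ofReal_ne_top)]
    have hb : BddBelow (Set.range fun K : Finset V =>
        (cutCapacity (flowCap 𝓔 w lam) (sourceSide 𝓔 K)).toReal) := (Set.finite_range _).bddBelow
    rw [sub_eq_add_neg, ciInf_add hb]
    congr 1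
    ext K
    have hle : inducedWeight 𝓔 w K ≤ totalWeight 𝓔 w :=
      Finset.sum_le_sum_of_subset_of_nonneg (Finset.filter_subset _ _) (fun e he _ => hw e he)
    rw [hc K, ENNReal.toReal_ofReal
      (add_nonneg (Nat.cast_nonneg _) (mul_nonneg hlam (sub_nonneg.2 hle)))]
    ring
end

section
/- There exists a finite weighted hypergraph H = (V, 𝓔), arising from an s–t routing instance, and coverage targets τ₁ < τ₂ in (0,1), such that every minimum-cardinality vertex set K₁ ⊆ V with e(K₁) ≥ τ₁·W and every minimum-cardinality vertex set K₂ ⊆ V with e(K₂) ≥ τ₂·W satisfy K₁ ⊄ K₂; that is, the exact optimal solutions of the conformal subgraph problem are not monotone in the coverage target. In particular this holds for the instance with three disjoint hyperedges P₁, P₂, P₃ over a vertex set partitioned into |P₁| = 2, |P₂| = 2, |P₃| = 3 vertices, with weights w_{P₁} = 0.3, w_{P₂} = 0.3, w_{P₃} = 0.4, and τ₁ = 0.6, τ₂ = 0.7. -/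
open Finset

/-- `K` is an optimal (minimum-cardinality) solution of the conformal subgraph
problem at coverage target `τ`. -/
def IsOptimalCover {V : Type*} [DecidableEq V]
    (𝓔 : Finset (Finset V)) (w : Finset V → ℝ) (τ : ℝ) (K : Finset V) : Prop :=
  τ * totalWeight 𝓔 w ≤ inducedWeight 𝓔 w K ∧
  ∀ K' : Finset V, τ * totalWeight 𝓔 w ≤ inducedWeight 𝓔 w K' →
    K.card ≤ K'.card

/-- The three disjoint paths of Example `monotone`, as hyperedges on `Fin 7`:
`P₁ = {0,1}`, `P₂ = {2,3}`, `P₃ = {4,5,6}`. -/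
def P₁ : Finset (Fin 7) := {0, 1}
def P₂ : Finset (Fin 7) := {2, 3}
def P₃ : Finset (Fin 7) := {4, 5, 6}

/-- The weights: `w(P₁) = 0.3`, `w(P₂) = 0.3`, `w(P₃) = 0.4`. -/
noncomputable def exWeight : Finset (Fin 7) → ℝ := fun e =>
  if e = P₁ then 0.3 else if e = P₂ then 0.3 else if e = P₃ then 0.4 else 0

theorem exInduced_eq (K : Finset (Fin 7)) :
    inducedWeight {P₁, P₂, P₃} exWeight K =
      (if P₁ ⊆ K then 0.3 else 0) + ((if P₂ ⊆ K then 0.3 else 0) + (if P₃ ⊆ K then 0.4 else 0)) := by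
  have h12 : P₁ ≠ P₂ := by decide
  have h13 : P₁ ≠ P₃ := by decide
  have h23 : P₂ ≠ P₃ := by decide
  unfold inducedWeight
  rw [Finset.sum_filter, Finset.sum_insert (by simp [h12, h13]),
    Finset.sum_insert (by simp [h23]), Finset.sum_singleton]
  simp [exWeight, h12.symm, h13.symm, h23.symm]

theorem exTotal_eq : totalWeight {P₁, P₂, P₃} exWeight = 1 := by
  have h12 : P₁ ≠ P₂ := by decide
  have h13 : P₁ ≠ P₃ := by decide
  have h23 : P₂ ≠ P₃ := by decide
  unfold totalWeight
  rw [Finset.sum_insert (by simp [h12, h13]),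
    Finset.sum_insert (by simp [h23]), Finset.sum_singleton]
  simp [exWeight, h12.symm, h13.symm, h23.symm]
  norm_num

theorem exMain (K₁ K₂ : Finset (Fin 7))
    (h1 : IsOptimalCover {P₁, P₂, P₃} exWeight 0.6 K₁)
    (h2 : IsOptimalCover {P₁, P₂, P₃} exWeight 0.7 K₂) : ¬ K₁ ⊆ K₂ := by
  intro hsub
  obtain ⟨a1, b1⟩ := h1
  obtain ⟨a2, b2⟩ := h2
  have c1 : K₁.card ≤ 4 := by
    refine b1 (P₁ ∪ P₂) ?_
    rw [exInduced_eq, exTotal_eq, if_pos (by decide), if_pos (by decide), if_neg (by decide)]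
    norm_num
  have c2 : K₂.card ≤ 5 := by
    refine b2 (P₁ ∪ P₃) ?_
    rw [exInduced_eq, exTotal_eq, if_pos (by decide), if_neg (by decide), if_pos (by decide)]
    norm_num
  rw [exInduced_eq, exTotal_eq] at a1 a2
  have k13 : ∀ K : Finset (Fin 7), P₁ ⊆ K → P₃ ⊆ K → 5 ≤ K.card := fun K h h' =>
    Finset.card_le_card (Finset.union_subset h h')
  have k23 : ∀ K : Finset (Fin 7), P₂ ⊆ K → P₃ ⊆ K → 5 ≤ K.card := fun K h h' =>
    Finset.card_le_card (Finset.union_subset h h')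
  have h12 : P₁ ⊆ K₁ ∧ P₂ ⊆ K₁ := by
    by_cases p1 : P₁ ⊆ K₁ <;> by_cases p2 : P₂ ⊆ K₁ <;> by_cases p3 : P₃ ⊆ K₁ <;>
      first
      | exact ⟨p1, p2⟩
      | (have := k13 K₁ p1 p3; omega)
      | (have := k23 K₁ p2 p3; omega)
      | (exfalso; simp only [p1, p2, p3, if_true, if_false] at a1; norm_num at a1)
  have h3 : P₃ ⊆ K₂ := by
    by_contra p3
    rw [if_pos (h12.1.trans hsub), if_pos (h12.2.trans hsub), if_neg p3] at a2
    norm_num at a2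
  have h7 : 7 ≤ K₂.card := Finset.card_le_card
    (Finset.union_subset (Finset.union_subset (h12.1.trans hsub) (h12.2.trans hsub)) h3)
  omega

/-- non-monotonicity of exact optimal conformal subgraphs.
For the instance with three disjoint hyperedges `P₁, P₂, P₃` with weights
`0.3, 0.3, 0.4` and coverage targets `τ₁ = 0.6 < τ₂ = 0.7`, every optimal
solution `K₁` at target `τ₁` and every optimal solution `K₂` at target `τ₂`
satisfy `K₁ ⊄ K₂`.  In particular there exists a finite weighted hypergraph
(with positive weights and targets `0 < τ₁ < τ₂ < 1`) whose exact optimal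
solutions are not monotone in the coverage target. -/
theorem optimal_conformal_subgraph_not_monotone :
    (∀ K₁ K₂ : Finset (Fin 7),
      IsOptimalCover {P₁, P₂, P₃} exWeight 0.6 K₁ →
      IsOptimalCover {P₁, P₂, P₃} exWeight 0.7 K₂ →
      ¬ K₁ ⊆ K₂) ∧
    ∃ (V : Type) (_ : Fintype V) (_ : DecidableEq V)
      (𝓔 : Finset (Finset V)) (w : Finset V → ℝ) (τ₁ τ₂ : ℝ),
      (∀ e ∈ 𝓔, 0 ≤ w e) ∧ 0 < τ₁ ∧ τ₁ < τ₂ ∧ τ₂ < 1 ∧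
      (∀ K₁ K₂ : Finset V,
        IsOptimalCover 𝓔 w τ₁ K₁ → IsOptimalCover 𝓔 w τ₂ K₂ → ¬ K₁ ⊆ K₂) := by
  refine ⟨exMain, Fin 7, inferInstance, inferInstance, {P₁, P₂, P₃}, exWeight, 0.6, 0.7,
    ?_, by norm_num, by norm_num, by norm_num, exMain⟩
  intro e _
  unfold exWeight
  split_ifs <;> norm_num
end
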